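/- arXiv:math/0306390 — 7 statements merged into one kernel-verified Lean document; each statement's English description precedes it below -/
import Mathlib

section
/- Let A be an open subset of ℝ⁴ and φ : A → ℂ a smooth map with ∑ᵢ₌₀³ ∂²φ/∂xᵢ² = 0 and ∑ᵢ₌₀³ (∂φ/∂xᵢ)² = 0 on A (a harmonic morphism to ℂ). Let ι : ℝ⁴ → ℂ⁴ be the inclusion of real points. Then there exist an open set Ω ⊆ ℂ⁴ containing ι(A) and a holomorphic map Φ : Ω → ℂ such that Φ(ι(x)) = φ(x) for all x ∈ A and, on Ω, ∑ᵢ₌₀³ ∂²Φ/∂zᵢ² = 0 and ∑ᵢ₌₀³ (∂Φ/∂zᵢ)² = 0. -/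
noncomputable section

/-- Real partial derivative in the `i`-th coordinate direction of a map `ℝ⁴ → ℂ`. -/
def pd (i : Fin 4) (f : (Fin 4 → ℝ) → ℂ) (x : Fin 4 → ℝ) : ℂ :=
  fderiv ℝ f x (Pi.single i 1)

/-- Complex partial derivative in the `i`-th coordinate direction of a map `ℂ⁴ → ℂ`. -/
def pdC (i : Fin 4) (f : (Fin 4 → ℂ) → ℂ) (z : Fin 4 → ℂ) : ℂ :=
  fderiv ℂ f z (Pi.single i 1)

/-- The inclusion of the real points `ℝ⁴ ↪ ℂ⁴`. -/
def iotaR (x : Fin 4 → ℝ) : Fin 4 → ℂ := fun i => (x i : ℂ)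

/-!
On a small ball around a real point, a cutoff `u` of a harmonic function `φ` is recovered from `Δu`
by the Newtonian potential, `C u(x) = ∫ |x - y|^(2 - n) Δu(y) dy` for `n ≥ 3`, and `Δu` vanishes
except at a distance from the centre. For the remaining `y` the real part of
`Q(z - y) = ∑ᵢ (zᵢ - yᵢ)²` stays positive for `z` near the centre in `ℂⁿ`, so the kernel
`Q(z - y)^(1 - n / 2)`, and with it `φ`, extends holomorphically to a complex ball. The condition
`n ≥ 3` costs nothing, as `φ` remains harmonic when regarded as a function of additional fictitious
variables.

A holomorphic function on a complex ball with real centre is determined by its real points, because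
it can be followed along the segment from `Re z` to `z`. This property is shared by unions and
intersections of such balls, so the local extensions agree where they overlap, and both differential
equations persist on the union of all the balls.
-/

open Set Filter Topology MeasureTheory Metric
open scoped ContDiff

section PartialDeriv

variable {𝕜 : Type*} [NontriviallyNormedField 𝕜] {ι : Type*} [DecidableEq ι] {F : Type*}
  [NormedAddCommGroup F] [NormedSpace 𝕜 F]

/-- The partial derivative `∂f/∂xᵢ` of a function on `𝕜^ι`. It is the common form of `pd` and
`pdC`, which are its cases `𝕜 = ℝ` and `𝕜 = ℂ` for `ι = Fin 4`; like `fderiv`, it has the value `0`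
where `f` is not differentiable. -/
def partialDeriv (𝕜 : Type*) [NontriviallyNormedField 𝕜] [NormedSpace 𝕜 F] (i : ι)
    (f : (ι → 𝕜) → F) (x : ι → 𝕜) : F :=
  fderiv 𝕜 f x (Pi.single i 1)

lemma partialDeriv_congr_nhds (i : ι) {f g : (ι → 𝕜) → F} {x : ι → 𝕜} (h : f =ᶠ[𝓝 x] g) :
    partialDeriv 𝕜 i f =ᶠ[𝓝 x] partialDeriv 𝕜 i g :=
  (h.fderiv (𝕜 := 𝕜)).fun_comp fun L => L (Pi.single i 1)

lemma hasCompactSupport_partialDeriv (i : ι) {f : (ι → 𝕜) → F} (hf : HasCompactSupport f) :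
    HasCompactSupport (partialDeriv 𝕜 i f) :=
  hf.fderiv_apply 𝕜 _

variable [Fintype ι]

/-- The Laplacian `∑ᵢ ∂²f/∂xᵢ²` in the standard coordinates of `𝕜^ι`. It is written with iterated
partial derivatives because Mathlib's Laplacian needs an inner product space, whereas `ι → 𝕜`
carries the sup norm. -/
def coordLaplacian (𝕜 : Type*) [NontriviallyNormedField 𝕜] [NormedSpace 𝕜 F]
    (f : (ι → 𝕜) → F) (x : ι → 𝕜) : F :=
  ∑ i, partialDeriv 𝕜 i (partialDeriv 𝕜 i f) x

lemma coordLaplacian_congr_nhds {f g : (ι → 𝕜) → F} {x : ι → 𝕜} (h : f =ᶠ[𝓝 x] g) :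
    coordLaplacian 𝕜 f x = coordLaplacian 𝕜 g x :=
  Finset.sum_congr rfl fun i _ =>
    (partialDeriv_congr_nhds i (partialDeriv_congr_nhds i h)).eq_of_nhds

lemma contDiffOn_partialDeriv (i : ι) {f : (ι → 𝕜) → F} {s : Set (ι → 𝕜)} {m n : ℕ∞ω}
    (hf : ContDiffOn 𝕜 n f s) (hs : IsOpen s) (hmn : m + 1 ≤ n) :
    ContDiffOn 𝕜 m (partialDeriv 𝕜 i f) s :=
  (hf.fderiv_of_isOpen hs hmn).clm_apply contDiffOn_const

lemma contDiff_partialDeriv (i : ι) {f : (ι → 𝕜) → F} {m n : ℕ∞ω}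
    (hf : ContDiff 𝕜 n f) (hmn : m + 1 ≤ n) : ContDiff 𝕜 m (partialDeriv 𝕜 i f) :=
  (hf.fderiv_right hmn).clm_apply contDiff_const

lemma continuous_coordLaplacian {f : (ι → 𝕜) → F} (hf : ContDiff 𝕜 2 f) :
    Continuous (coordLaplacian 𝕜 f) :=
  continuous_finsetSum _ fun i _ =>
    (contDiff_partialDeriv i (contDiff_partialDeriv i hf (m := 1) (by norm_num))
      (m := 0) (by norm_num)).continuous

lemma coordLaplacian_eq_zero_of_notMem_tsupport {f : (ι → 𝕜) → F} {x : ι → 𝕜}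
    (hx : x ∉ tsupport f) : coordLaplacian 𝕜 f x = 0 :=
  Finset.sum_eq_zero fun _ _ => image_eq_zero_of_notMem_tsupport fun h =>
    hx (tsupport_fderiv_apply_subset 𝕜 _ (tsupport_fderiv_apply_subset 𝕜 _ h))

lemma hasCompactSupport_coordLaplacian {f : (ι → 𝕜) → F} (hf : HasCompactSupport f) :
    HasCompactSupport (coordLaplacian 𝕜 f) :=
  HasCompactSupport.intro hf.isCompact fun _ => coordLaplacian_eq_zero_of_notMem_tsupport

end PartialDeriv

section RealPoints

variable {ι : Type*}

/-- The inclusion `ℝ^ι ↪ ℂ^ι` of the real points as a continuous linear map: `iotaR` over an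
arbitrary index type. -/
def ofRealPi : (ι → ℝ) →L[ℝ] (ι → ℂ) := ContinuousLinearMap.piMap fun _ => Complex.ofRealCLM

/-- The coordinatewise real part `ℂ^ι → ℝ^ι`. -/
def rePi : (ι → ℂ) →L[ℝ] (ι → ℝ) := ContinuousLinearMap.piMap fun _ => Complex.reCLM

/-- The coordinatewise imaginary part `ℂ^ι → ℝ^ι`. -/
def imPi : (ι → ℂ) →L[ℝ] (ι → ℝ) := ContinuousLinearMap.piMap fun _ => Complex.imCLM

@[simp] lemma ofRealPi_apply (x : ι → ℝ) (i : ι) : ofRealPi x i = (x i : ℂ) := rfl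

@[simp] lemma rePi_apply (z : ι → ℂ) (i : ι) : rePi z i = (z i).re := rfl

@[simp] lemma imPi_apply (z : ι → ℂ) (i : ι) : imPi z i = (z i).im := rfl

@[simp] lemma rePi_ofRealPi (x : ι → ℝ) : rePi (ofRealPi x) = x := rfl

@[simp] lemma imPi_ofRealPi (x : ι → ℝ) : imPi (ofRealPi x) = 0 := rfl

lemma ofRealPi_single [DecidableEq ι] (i : ι) :
    ofRealPi (Pi.single i 1) = Pi.single i (1 : ℂ) := by
  ext j
  simp only [ofRealPi_apply, Pi.single_apply]
  split <;> simp

lemma ofRealPi_rePi_add_I_smul_imPi (z : ι → ℂ) :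
    ofRealPi (rePi z) + Complex.I • ofRealPi (imPi z) = z := by
  ext i
  simp [mul_comm Complex.I]

lemma partialDeriv_ofRealPi [Finite ι] [DecidableEq ι] {F : Type*} [NormedAddCommGroup F]
    [NormedSpace ℂ F] (i : ι) {G : (ι → ℂ) → F} {f : (ι → ℝ) → F} {x : ι → ℝ}
    (hG : DifferentiableAt ℂ G (ofRealPi x)) (hGf : G ∘ ofRealPi =ᶠ[𝓝 x] f) :
    partialDeriv ℂ i G (ofRealPi x) = partialDeriv ℝ i f x := by
  cases nonempty_fintype ι
  have hcomp := (hG.hasFDerivAt.restrictScalars ℝ).comp x ofRealPi.hasFDerivAt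
  rw [partialDeriv, partialDeriv, ← hGf.fderiv_eq, hcomp.fderiv, ← ofRealPi_single]
  rfl

variable [Fintype ι]

lemma norm_ofRealPi (x : ι → ℝ) : ‖ofRealPi x‖ = ‖x‖ := by
  simp [Pi.norm_def]

lemma norm_rePi_le (z : ι → ℂ) : ‖rePi z‖ ≤ ‖z‖ :=
  (pi_norm_le_iff_of_nonneg (norm_nonneg z)).2 fun i =>
    (Complex.abs_re_le_norm (z i)).trans (norm_le_pi_norm z i)

lemma norm_imPi_le (z : ι → ℂ) : ‖imPi z‖ ≤ ‖z‖ :=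
  (pi_norm_le_iff_of_nonneg (norm_nonneg z)).2 fun i =>
    (Complex.abs_im_le_norm (z i)).trans (norm_le_pi_norm z i)

lemma ofRealPi_mem_ball_iff {x y : ι → ℝ} {r : ℝ} :
    ofRealPi y ∈ ball (ofRealPi x) r ↔ y ∈ ball x r := by
  rw [mem_ball_iff_norm, ← map_sub, norm_ofRealPi, mem_ball_iff_norm]

lemma rePi_mem_ball {x : ι → ℝ} {z : ι → ℂ} {r : ℝ} (hz : z ∈ ball (ofRealPi x) r) :
    rePi z ∈ ball x r := by
  rw [mem_ball_iff_norm] at hz ⊢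
  simpa using (norm_rePi_le (z - ofRealPi x)).trans_lt hz

lemma norm_imPi_lt_of_mem_ball {x : ι → ℝ} {z : ι → ℂ} {r : ℝ} (hz : z ∈ ball (ofRealPi x) r) :
    ‖imPi z‖ < r := by
  rw [mem_ball_iff_norm] at hz
  simpa using (norm_imPi_le (z - ofRealPi x)).trans_lt hz

end RealPoints

section VerticallyStarShaped

variable {ι : Type*}

/-- A set in `ℂ^ι` is vertically star-shaped if with every point `z` it contains the segment from
the real point `Re z` to `z`. This condition passes to unions and intersections, and on open sets
it forces a holomorphic function to be determined by its values at the real points. -/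
def IsVerticallyStarShaped (Ω : Set (ι → ℂ)) : Prop :=
  ∀ z ∈ Ω, segment ℝ (ofRealPi (rePi z)) z ⊆ Ω

namespace IsVerticallyStarShaped

lemma inter {Ω Ω' : Set (ι → ℂ)} (h : IsVerticallyStarShaped Ω)
    (h' : IsVerticallyStarShaped Ω') : IsVerticallyStarShaped (Ω ∩ Ω') :=
  fun z hz => subset_inter (h z hz.1) (h' z hz.2)

lemma iUnion {κ : Sort*} {Ω : κ → Set (ι → ℂ)} (h : ∀ k, IsVerticallyStarShaped (Ω k)) :
    IsVerticallyStarShaped (⋃ k, Ω k) := fun z hz => by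
  obtain ⟨k, hk⟩ := mem_iUnion.1 hz
  exact (h k z hk).trans (subset_iUnion Ω k)

lemma ball [Fintype ι] (x : ι → ℝ) (r : ℝ) : IsVerticallyStarShaped (ball (ofRealPi x) r) :=
  fun _ hz => (convex_ball _ _).segment_subset (ofRealPi_mem_ball_iff.2 (rePi_mem_ball hz)) hz

variable [Finite ι] {F : Type*} [NormedAddCommGroup F] [NormedSpace ℂ F] [CompleteSpace F]

/- Restrict `f` to the complex line `w ↦ Re z + w Im z`: it vanishes at the real `w` near `0`, and
`w = I` gives the point `z`. -/
lemma eqOn_zero_of_eq_zero_on_real {Ω : Set (ι → ℂ)} (hstar : IsVerticallyStarShaped Ω)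
    (hΩ : IsOpen Ω) {f : (ι → ℂ) → F} (hf : DifferentiableOn ℂ f Ω)
    (hreal : ∀ x, ofRealPi x ∈ Ω → f (ofRealPi x) = 0) : EqOn f 0 Ω := by
  cases nonempty_fintype ι
  intro z hz
  let line : ℂ → ι → ℂ := fun w => ofRealPi (rePi z) + w • ofRealPi (imPi z)
  have hline : Differentiable ℂ line := by fun_prop
  have hline_I : line Complex.I = z := ofRealPi_rePi_add_I_smul_imPi z
  have hline_real (t : ℝ) : line t = ofRealPi (rePi z + t • imPi z) := by
    ext i
    simp [line]
  have hsegment : segment ℝ 0 Complex.I ⊆ line ⁻¹' Ω := by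
    rintro _ ⟨a, b, ha, hb, hab, rfl⟩
    refine hstar z hz ⟨a, b, ha, hb, hab, ?_⟩
    ext i
    apply Complex.ext
    · simp [line, ← add_mul, hab]
    · simp [line]
  have hanalytic : AnalyticOnNhd ℂ (f ∘ line) (segment ℝ 0 Complex.I) :=
    ((hf.comp hline.differentiableOn (mapsTo_preimage line Ω)).analyticOnNhd
      (hΩ.preimage hline.continuous)).mono hsegment
  have hzero : ∃ᶠ w in 𝓝[≠] (0 : ℂ), (f ∘ line) w = 0 := by
    have hofReal : Tendsto ((↑) : ℝ → ℂ) (𝓝[≠] 0) (𝓝[≠] 0) :=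
      (Complex.continuous_ofReal.tendsto' 0 0 Complex.ofReal_zero).inf
        (tendsto_principal_principal.2 fun t ht => by simpa using ht)
    have hmem : ∀ᶠ w in 𝓝[≠] (0 : ℂ), line w ∈ Ω :=
      nhdsWithin_le_nhds ((hΩ.preimage hline.continuous).mem_nhds
        (hsegment (left_mem_segment ℝ 0 Complex.I)))
    refine hofReal.frequently (Eventually.frequently ?_)
    filter_upwards [hofReal.eventually hmem] with t ht
    rw [hline_real] at ht
    simpa only [Function.comp_apply, hline_real] using hreal _ ht
  simpa [hline_I] using hanalytic.eqOn_zero_of_preconnected_of_frequently_eq_zero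
    (convex_segment 0 Complex.I).isPreconnected (left_mem_segment ℝ 0 Complex.I) hzero
    (right_mem_segment ℝ 0 Complex.I)

end IsVerticallyStarShaped

end VerticallyStarShaped

section HolomorphicExtension

variable {ι : Type*} [Fintype ι] {F : Type*} [NormedAddCommGroup F] [NormedSpace ℂ F]

/-- `Φ` is a holomorphic extension to the open set `Ω ⊆ ℂ^ι` of the function `φ` on `A ⊆ ℝ^ι`, where
`A` is exactly the set of real points of `Ω`. The domain is required to be vertically star-shaped,
so that the extension is unique and inherits every relation between derivatives of `φ`. -/
structure IsHolomorphicExtension (Φ : (ι → ℂ) → F) (Ω : Set (ι → ℂ)) (φ : (ι → ℝ) → F)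
    (A : Set (ι → ℝ)) : Prop where
  isOpen : IsOpen Ω
  isVerticallyStarShaped : IsVerticallyStarShaped Ω
  preimage_ofRealPi : ofRealPi ⁻¹' Ω = A
  contDiffOn : ContDiffOn ℂ ∞ Φ Ω
  eqOn : EqOn (Φ ∘ ofRealPi) φ A

namespace IsHolomorphicExtension

variable {Φ Φ' : (ι → ℂ) → F} {Ω Ω' : Set (ι → ℂ)} {φ : (ι → ℝ) → F} {A A' : Set (ι → ℝ)}

lemma ofRealPi_mem (h : IsHolomorphicExtension Φ Ω φ A) {x : ι → ℝ} (hx : x ∈ A) :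
    ofRealPi x ∈ Ω := by
  rwa [← h.preimage_ofRealPi] at hx

lemma isOpen_real (h : IsHolomorphicExtension Φ Ω φ A) : IsOpen A :=
  h.preimage_ofRealPi ▸ h.isOpen.preimage ofRealPi.continuous

lemma differentiableOn (h : IsHolomorphicExtension Φ Ω φ A) : DifferentiableOn ℂ Φ Ω :=
  h.contDiffOn.differentiableOn (by simp)

protected lemma partialDeriv [DecidableEq ι] (h : IsHolomorphicExtension Φ Ω φ A) (i : ι) :
    IsHolomorphicExtension (partialDeriv ℂ i Φ) Ω (partialDeriv ℝ i φ) A where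
  isOpen := h.isOpen
  isVerticallyStarShaped := h.isVerticallyStarShaped
  preimage_ofRealPi := h.preimage_ofRealPi
  contDiffOn := contDiffOn_partialDeriv i h.contDiffOn h.isOpen le_rfl
  eqOn _x hx := partialDeriv_ofRealPi i
    (h.differentiableOn.differentiableAt (h.isOpen.mem_nhds (h.ofRealPi_mem hx)))
    (h.eqOn.eventuallyEq_of_mem (h.isOpen_real.mem_nhds hx))

lemma eqOn_zero {G : Type*} [NormedAddCommGroup G] [NormedSpace ℂ G] [CompleteSpace G]
    (h : IsHolomorphicExtension Φ Ω φ A) {Ψ : (ι → ℂ) → G} (hΨ : DifferentiableOn ℂ Ψ Ω)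
    (hreal : EqOn (Ψ ∘ ofRealPi) 0 A) : EqOn Ψ 0 Ω :=
  h.isVerticallyStarShaped.eqOn_zero_of_eq_zero_on_real h.isOpen hΨ fun _ hx =>
    hreal (h.preimage_ofRealPi ▸ hx)

lemma coordLaplacian_eq_zero [DecidableEq ι] [CompleteSpace F]
    (h : IsHolomorphicExtension Φ Ω φ A) (hφ : ∀ x ∈ A, coordLaplacian ℝ φ x = 0) :
    ∀ z ∈ Ω, coordLaplacian ℂ Φ z = 0 :=
  h.eqOn_zero (.fun_sum fun i _ => ((h.partialDeriv i).partialDeriv i).differentiableOn)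
    fun x hx => (Finset.sum_congr rfl fun i _ =>
      ((h.partialDeriv i).partialDeriv i).eqOn hx).trans (hφ x hx)

lemma sum_partialDeriv_sq_eq_zero [DecidableEq ι] {Φ : (ι → ℂ) → ℂ} {φ : (ι → ℝ) → ℂ}
    (h : IsHolomorphicExtension Φ Ω φ A) (hφ : ∀ x ∈ A, ∑ i, partialDeriv ℝ i φ x ^ 2 = 0) :
    ∀ z ∈ Ω, ∑ i, partialDeriv ℂ i Φ z ^ 2 = 0 :=
  h.eqOn_zero (.fun_sum fun i _ => (h.partialDeriv i).differentiableOn.pow 2)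
    fun x hx => (Finset.sum_congr rfl fun i _ =>
      congrArg (· ^ 2) ((h.partialDeriv i).eqOn hx)).trans (hφ x hx)

lemma eqOn_inter [CompleteSpace F] (h : IsHolomorphicExtension Φ Ω φ A)
    (h' : IsHolomorphicExtension Φ' Ω' φ A') : EqOn Φ Φ' (Ω ∩ Ω') := by
  have hsub : EqOn (fun z => Φ z - Φ' z) 0 (Ω ∩ Ω') :=
    (h.isVerticallyStarShaped.inter h'.isVerticallyStarShaped).eqOn_zero_of_eq_zero_on_real
      (h.isOpen.inter h'.isOpen)
      ((h.differentiableOn.mono inter_subset_left).fun_sub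
        (h'.differentiableOn.mono inter_subset_right))
      fun x hx => sub_eq_zero.2 ((h.eqOn (h.preimage_ofRealPi ▸ hx.1)).trans
        (h'.eqOn (h'.preimage_ofRealPi ▸ hx.2)).symm)
  exact fun z hz => sub_eq_zero.1 (hsub hz)

end IsHolomorphicExtension

lemma exists_isHolomorphicExtension_of_locally [CompleteSpace F] {φ : (ι → ℝ) → F}
    {A : Set (ι → ℝ)}
    (h : ∀ x ∈ A, ∃ U ⊆ A, x ∈ U ∧ ∃ Φ Ω, IsHolomorphicExtension Φ Ω φ U) :
    ∃ Φ Ω, IsHolomorphicExtension Φ Ω φ A := by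
  choose! U hUA hxU Ψ Θ hΨ using h
  let Ω := ⋃ x : A, Θ x
  have hmem (z : ι → ℂ) (hz : z ∈ Ω) : ∃ x ∈ A, z ∈ Θ x := by simpa [Ω] using hz
  choose! c hcA hzc using hmem
  have hΦ {x : ι → ℝ} (hx : x ∈ A) : EqOn (fun z => Ψ (c z) z) (Ψ x) (Θ x) := fun z hz =>
    have hzΩ : z ∈ Ω := mem_iUnion.2 ⟨⟨x, hx⟩, hz⟩
    (hΨ _ (hcA z hzΩ)).eqOn_inter (hΨ x hx) ⟨hzc z hzΩ, hz⟩
  refine ⟨fun z => Ψ (c z) z, Ω, isOpen_iUnion fun x => (hΨ x x.2).isOpen,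
    .iUnion fun x => (hΨ x x.2).isVerticallyStarShaped, ?_, fun z hz => ?_, fun x hx => ?_⟩
  · rw [preimage_iUnion, iUnion_congr fun x : A => (hΨ x x.2).preimage_ofRealPi]
    exact Subset.antisymm (iUnion_subset fun x => hUA x x.2)
      fun x hx => mem_iUnion.2 ⟨⟨x, hx⟩, hxU x hx⟩
  · have hx := hcA z hz
    exact (((hΨ _ hx).contDiffOn.congr (hΦ hx)).contDiffAt
      ((hΨ _ hx).isOpen.mem_nhds (hzc z hz))).contDiffWithinAt
  · exact (hΦ hx ((hΨ x hx).ofRealPi_mem (hxU x hx))).trans ((hΨ x hx).eqOn (hxU x hx))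

end HolomorphicExtension

section Green

variable {ι : Type*} [Fintype ι] [DecidableEq ι] {F : Type*} [NormedAddCommGroup F]
  [NormedSpace ℝ F] {k : (ι → ℝ) → ℝ} {u : (ι → ℝ) → F}

lemma integral_smul_partialDeriv (i : ι) (hk : ContDiff ℝ 1 k) (hu : ContDiff ℝ 1 u)
    (hsupp : HasCompactSupport u) :
    ∫ y, k y • partialDeriv ℝ i u y = -∫ y, partialDeriv ℝ i k y • u y := by
  have hk' : Continuous (partialDeriv ℝ i k) :=
    (contDiff_partialDeriv i hk (m := 0) (by simp)).continuous
  have hu' : Continuous (partialDeriv ℝ i u) :=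
    (contDiff_partialDeriv i hu (m := 0) (by simp)).continuous
  exact integral_smul_fderiv_eq_neg_fderiv_smul_of_integrable
    ((hk'.smul hu.continuous).integrable_of_hasCompactSupport hsupp.smul_left)
    ((hk.continuous.smul hu').integrable_of_hasCompactSupport
      (hasCompactSupport_partialDeriv i hsupp).smul_left)
    ((hk.continuous.smul hu.continuous).integrable_of_hasCompactSupport hsupp.smul_left)
    (fun y _ => hk.differentiable one_ne_zero y) (fun y _ => hu.differentiable one_ne_zero y)

lemma integral_smul_coordLaplacian (hk : ContDiff ℝ 2 k) (hu : ContDiff ℝ 2 u)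
    (hsupp : HasCompactSupport u) :
    ∫ y, k y • coordLaplacian ℝ u y = ∫ y, coordLaplacian ℝ k y • u y := by
  have hdk (i : ι) : ContDiff ℝ 1 (partialDeriv ℝ i k) := contDiff_partialDeriv i hk (by norm_num)
  have hdu (i : ι) : ContDiff ℝ 1 (partialDeriv ℝ i u) := contDiff_partialDeriv i hu (by norm_num)
  have hddk (i : ι) : Continuous (partialDeriv ℝ i (partialDeriv ℝ i k)) :=
    (contDiff_partialDeriv i (hdk i) (m := 0) (by simp)).continuous
  have hddu (i : ι) : Continuous (partialDeriv ℝ i (partialDeriv ℝ i u)) :=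
    (contDiff_partialDeriv i (hdu i) (m := 0) (by simp)).continuous
  have hdu_supp (i : ι) := hasCompactSupport_partialDeriv (𝕜 := ℝ) i hsupp
  simp only [coordLaplacian, Finset.smul_sum, Finset.sum_smul]
  rw [integral_finsetSum, integral_finsetSum]
  · refine Finset.sum_congr rfl fun i _ => ?_
    rw [integral_smul_partialDeriv i (hk.of_le one_le_two) (hdu i) (hdu_supp i),
      integral_smul_partialDeriv i (hdk i) (hu.of_le one_le_two) hsupp]
    exact neg_neg _
  · exact fun i _ => ((hddk i).smul hu.continuous).integrable_of_hasCompactSupport hsupp.smul_left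
  · exact fun i _ => (hk.continuous.smul (hddu i)).integrable_of_hasCompactSupport
      (hasCompactSupport_partialDeriv i (hdu_supp i)).smul_left

end Green

section SumSq

variable {ι : Type*} [Fintype ι]

/-- The standard quadratic form `∑ᵢ vᵢ²`, over `ℝ` and over `ℂ`. The sup norm of `ι → ℝ` is not its
square root, so the Newtonian kernel `|v|^(2 - n)` is written as a power of `sumSq v`. -/
def sumSq {R : Type*} [Semiring R] (v : ι → R) : R := ∑ i, v i ^ 2

lemma sumSq_nonneg (v : ι → ℝ) : 0 ≤ sumSq v := Finset.sum_nonneg fun _ _ => sq_nonneg _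

lemma sumSq_add_pos (v : ι → ℝ) {ε : ℝ} (hε : 0 < ε) : 0 < sumSq v + ε :=
  add_pos_of_nonneg_of_pos (sumSq_nonneg v) hε

lemma sumSq_smul {R : Type*} [CommSemiring R] (c : R) (v : ι → R) :
    sumSq (c • v) = c ^ 2 * sumSq v := by
  simp [sumSq, mul_pow, Finset.mul_sum]

lemma norm_sq_le_sumSq (v : ι → ℝ) : ‖v‖ ^ 2 ≤ sumSq v :=
  (Real.le_sqrt (norm_nonneg v) (sumSq_nonneg v)).1 <|
    (pi_norm_le_iff_of_nonneg (Real.sqrt_nonneg _)).2 fun i =>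
      Real.abs_le_sqrt (Finset.single_le_sum (f := fun j => v j ^ 2)
        (fun j _ => sq_nonneg (v j)) (Finset.mem_univ i))

lemma sumSq_le_card_mul_norm_sq (v : ι → ℝ) : sumSq v ≤ Fintype.card ι * ‖v‖ ^ 2 := by
  have hle : ∀ i ∈ Finset.univ, v i ^ 2 ≤ ‖v‖ ^ 2 := fun i _ =>
    sq_le_sq' (neg_le_of_abs_le (norm_le_pi_norm v i)) (le_of_abs_le (norm_le_pi_norm v i))
  simpa [sumSq] using Finset.sum_le_card_nsmul _ _ _ hle

lemma sumSq_ofRealPi (v : ι → ℝ) : sumSq (ofRealPi v) = ((sumSq v : ℝ) : ℂ) := by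
  simp [sumSq]

lemma re_sumSq (z : ι → ℂ) : (sumSq z).re = sumSq (rePi z) - sumSq (imPi z) := by
  simp [sumSq, ← Finset.sum_sub_distrib, sq]

lemma contDiff_sumSq {𝕜 : Type*} [NontriviallyNormedField 𝕜] {n : ℕ∞ω} :
    ContDiff 𝕜 n (sumSq : (ι → 𝕜) → 𝕜) :=
  ContDiff.sum fun i _ => (contDiff_apply 𝕜 𝕜 i).pow 2

lemma hasFDerivAt_sumSq_sub (x y : ι → ℝ) :
    HasFDerivAt (fun y => sumSq (x - y))
      (∑ i, (-2 * (x i - y i)) • ContinuousLinearMap.proj (R := ℝ) (φ := fun _ : ι => ℝ) i) y := by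
  refine HasFDerivAt.fun_sum fun i _ =>
    (((hasFDerivAt_apply (𝕜 := ℝ) i y).const_sub (x i)).pow 2).congr_fderiv ?_
  ext v
  simp

lemma sum_smul_proj_single [DecidableEq ι] {R : Type*} [Field R] [TopologicalSpace R]
    [IsTopologicalRing R] (c : ι → R) (i : ι) :
    (∑ j, c j • ContinuousLinearMap.proj (R := R) (φ := fun _ : ι => R) j) (Pi.single i 1) =
      c i := by
  simp [Pi.single_apply]

end SumSq

section RegularisedKernel

variable {ι : Type*} [Fintype ι]

lemma contDiff_sumSq_sub_add_rpow (x : ι → ℝ) {ε : ℝ} (hε : 0 < ε) (a : ℝ) {n : ℕ∞ω} :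
    ContDiff ℝ n fun y => (sumSq (x - y) + ε) ^ a :=
  ((contDiff_sumSq.comp (contDiff_const.sub contDiff_id)).add contDiff_const).rpow_const_of_ne
    fun y => (sumSq_add_pos (x - y) hε).ne'

variable [DecidableEq ι]

lemma partialDeriv_sumSq_sub_add_rpow (i : ι) (x : ι → ℝ) {ε : ℝ} (hε : 0 < ε) (a : ℝ) :
    partialDeriv ℝ i (fun y => (sumSq (x - y) + ε) ^ a) =
      fun y => -2 * a * (x i - y i) * (sumSq (x - y) + ε) ^ (a - 1) := by
  ext y
  have hne := (sumSq_add_pos (x - y) hε).ne'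
  rw [partialDeriv, (((hasFDerivAt_sumSq_sub x y).add_const ε).rpow_const (.inl hne)).fderiv]
  rw [smul_apply, sum_smul_proj_single, smul_eq_mul]
  ring

lemma partialDeriv_partialDeriv_sumSq_sub_add_rpow (i : ι) (x y : ι → ℝ) {ε : ℝ} (hε : 0 < ε)
    (a : ℝ) :
    partialDeriv ℝ i (partialDeriv ℝ i fun y => (sumSq (x - y) + ε) ^ a) y =
      2 * a * (sumSq (x - y) + ε) ^ (a - 1) +
        4 * a * (a - 1) * (x i - y i) ^ 2 * (sumSq (x - y) + ε) ^ (a - 2) := by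
  have hne := (sumSq_add_pos (x - y) hε).ne'
  have hlin := ((hasFDerivAt_apply (𝕜 := ℝ) i y).const_sub (x i)).const_mul (-2 * a)
  have hpow := ((hasFDerivAt_sumSq_sub x y).add_const ε).rpow_const (p := a - 1) (.inl hne)
  rw [partialDeriv_sumSq_sub_add_rpow i x hε a, partialDeriv, (hlin.fun_mul hpow).fderiv,
    show a - 2 = a - 1 - 1 by ring]
  simp only [add_apply, smul_apply, neg_apply, sum_smul_proj_single,
    ContinuousLinearMap.proj_apply, Pi.single_eq_same, smul_eq_mul]
  ring

lemma coordLaplacian_sumSq_sub_add_rpow (x y : ι → ℝ) {ε : ℝ} (hε : 0 < ε) {a : ℝ}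
    (ha : Fintype.card ι = 2 - 2 * a) :
    coordLaplacian ℝ (fun y => (sumSq (x - y) + ε) ^ a) y =
      -(4 * a * (a - 1)) * (ε * (sumSq (x - y) + ε) ^ (a - 2)) := by
  have hne := (sumSq_add_pos (x - y) hε).ne'
  have hpow : (sumSq (x - y) + ε) ^ (a - 1) =
      (sumSq (x - y) + ε) * (sumSq (x - y) + ε) ^ (a - 2) := by
    rw [mul_comm, ← Real.rpow_add_one hne]
    ring_nf
  have hsum : ∑ i, (x i - y i) ^ 2 = sumSq (x - y) := rfl
  simp only [coordLaplacian, partialDeriv_partialDeriv_sumSq_sub_add_rpow _ x y hε,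
    Finset.sum_add_distrib, ← Finset.sum_mul, ← Finset.mul_sum, hsum, hpow, Finset.sum_const,
    Finset.card_univ, nsmul_eq_mul, ha]
  ring

end RegularisedKernel

section NewtonianPotential

variable {ι : Type*} [Fintype ι] {F : Type*} [NormedAddCommGroup F] [NormedSpace ℝ F]

lemma continuous_one_add_sumSq_rpow (b : ℝ) :
    Continuous fun v : ι → ℝ => (1 + sumSq v) ^ b :=
  (continuous_const.add (contDiff_sumSq (𝕜 := ℝ) (n := 0)).continuous).rpow_const
    fun v => .inl (add_pos_of_pos_of_nonneg one_pos (sumSq_nonneg v)).ne'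

lemma integrable_one_add_sumSq_rpow {b : ℝ} (hb : Fintype.card ι < 2 * b) :
    Integrable fun v : ι → ℝ => (1 + sumSq v) ^ (-b) := by
  have hb₀ : 0 < b := by linarith [Nat.cast_nonneg (α := ℝ) (Fintype.card ι)]
  have hnorm := integrable_rpow_neg_one_add_norm_sq (E := ι → ℝ) (μ := volume) (r := 2 * b)
    (by simpa using hb)
  refine hnorm.mono' (continuous_one_add_sumSq_rpow (-b)).aestronglyMeasurable
    (.of_forall fun v => ?_)
  have hq := sumSq_nonneg v
  rw [Real.norm_of_nonneg (by positivity), neg_div, mul_div_cancel_left₀ b two_ne_zero]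
  exact Real.rpow_le_rpow_of_nonpos (by positivity) (by linarith [norm_sq_le_sumSq v])
    (neg_nonpos.2 hb₀.le)

lemma integral_one_add_sumSq_rpow_pos {b : ℝ} (hb : Fintype.card ι < 2 * b) :
    0 < ∫ v : ι → ℝ, (1 + sumSq v) ^ (-b) := by
  have hpos (v : ι → ℝ) : 0 < (1 + sumSq v) ^ (-b) :=
    Real.rpow_pos_of_pos (add_pos_of_pos_of_nonneg one_pos (sumSq_nonneg v)) _
  exact integral_pos_of_integrable_nonneg_nonzero (x := 0) (continuous_one_add_sumSq_rpow (-b))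
    (integrable_one_add_sumSq_rpow hb) (fun v => (hpos v).le) (hpos 0).ne'

lemma tendsto_norm_pow_mul_one_add_sumSq_rpow {b : ℝ} (hb : Fintype.card ι < 2 * b) :
    Tendsto (fun v : ι → ℝ => ‖v‖ ^ Fintype.card ι * (1 + sumSq v) ^ (-b))
      (Bornology.cobounded (ι → ℝ)) (𝓝 0) := by
  have hb₀ : 0 < b := by linarith [Nat.cast_nonneg (α := ℝ) (Fintype.card ι)]
  have hnorm := tendsto_norm_cobounded_atTop (E := ι → ℝ)
  refine squeeze_zero' (.of_forall fun v => ?_) ?_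
    ((tendsto_rpow_neg_atTop (sub_pos.2 hb)).comp hnorm)
  · have := sumSq_nonneg v
    positivity
  · filter_upwards [hnorm.eventually_gt_atTop 0] with v hv
    calc ‖v‖ ^ Fintype.card ι * (1 + sumSq v) ^ (-b)
        ≤ ‖v‖ ^ Fintype.card ι * (‖v‖ ^ 2) ^ (-b) := by
          refine mul_le_mul_of_nonneg_left (Real.rpow_le_rpow_of_nonpos (by positivity) ?_
            (neg_nonpos.2 hb₀.le)) (by positivity)
          linarith [norm_sq_le_sumSq v]
      _ = ‖v‖ ^ (-(2 * b - Fintype.card ι)) := by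
          rw [← Real.rpow_natCast, ← Real.rpow_natCast, ← Real.rpow_mul hv.le, ← Real.rpow_add hv]
          push_cast
          ring_nf

lemma rpow_pow_card_mul_one_add_sumSq_smul_rpow (b : ℝ) (v : ι → ℝ) {ε : ℝ} (hε : 0 < ε) :
    (ε ^ (-(1 / 2) : ℝ)) ^ Fintype.card ι * (1 + sumSq (ε ^ (-(1 / 2) : ℝ) • v)) ^ (-b) =
      ε ^ (b - Fintype.card ι / 2) * (sumSq v + ε) ^ (-b) := by
  have hsq : (ε ^ (-(1 / 2) : ℝ)) ^ 2 = ε⁻¹ := by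
    rw [← Real.rpow_natCast, ← Real.rpow_mul hε.le, ← Real.rpow_neg_one]
    norm_num
  have hbase : 1 + ε⁻¹ * sumSq v = ε⁻¹ * (sumSq v + ε) := by
    field_simp
    ring
  rw [sumSq_smul, hsq, hbase, Real.mul_rpow (inv_nonneg.2 hε.le) (sumSq_add_pos v hε).le,
    Real.inv_rpow hε.le, Real.rpow_neg hε.le b, inv_inv, ← mul_assoc, ← Real.rpow_natCast,
    ← Real.rpow_mul hε.le, ← Real.rpow_add hε]
  ring_nf

lemma tendsto_rpow_smul_integral_sumSq_sub_add_rpow_smul [CompleteSpace F] {b : ℝ}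
    (hb : Fintype.card ι < 2 * b) (x : ι → ℝ) {u : (ι → ℝ) → F} (hu : Integrable u)
    (hux : ContinuousAt u x) :
    Tendsto (fun ε : ℝ => ε ^ (b - Fintype.card ι / 2) •
        ∫ y, (sumSq (x - y) + ε) ^ (-b) • u y) (𝓝[>] 0)
      (𝓝 ((∫ v : ι → ℝ, (1 + sumSq v) ^ (-b)) • u x)) := by
  set C := ∫ v : ι → ℝ, (1 + sumSq v) ^ (-b)
  have hC : 0 < C := integral_one_add_sumSq_rpow_pos hb
  have hpeak := (tendsto_integral_comp_smul_smul_of_integrable' (μ := volume) (x₀ := x)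
    (φ := fun v : ι → ℝ => C⁻¹ * (1 + sumSq v) ^ (-b))
    (fun v => by have := sumSq_nonneg v; positivity)
    (by rw [integral_const_mul, inv_mul_cancel₀ hC.ne'])
    (by simpa [mul_left_comm] using
      (tendsto_norm_pow_mul_one_add_sumSq_rpow hb).const_mul C⁻¹) hu hux).const_smul C
  have hscale : Tendsto (fun ε : ℝ => ε ^ (-(1 / 2) : ℝ)) (𝓝[>] 0) atTop :=
    tendsto_rpow_neg_nhdsGT_zero (by norm_num)
  refine (hpeak.comp hscale).congr' ?_
  filter_upwards [self_mem_nhdsWithin] with ε (hε : 0 < ε)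
  simp only [Function.comp_apply, ← integral_smul, smul_smul, Module.finrank_fintype_fun_eq_card]
  refine integral_congr_ae (.of_forall fun y => congrArg (· • u y) ?_)
  change C * (_ * (C⁻¹ * _)) = _
  rw [← rpow_pow_card_mul_one_add_sumSq_smul_rpow b (x - y) hε]
  field_simp

lemma tendsto_integral_sumSq_sub_add_rpow_smul {a : ℝ} (ha : a ≤ 0) {x : ι → ℝ} {d : ℝ}
    (hd : 0 < d) {g : (ι → ℝ) → F} (hg : Integrable g) (hgx : EqOn g 0 (ball x d)) :
    Tendsto (fun ε : ℝ => ∫ y, (sumSq (x - y) + ε) ^ a • g y) (𝓝[>] 0)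
      (𝓝 (∫ y, sumSq (x - y) ^ a • g y)) := by
  have hdist {y : ι → ℝ} (hy : y ∉ ball x d) : d ^ 2 ≤ sumSq (x - y) := by
    rw [mem_ball', not_lt, dist_eq_norm] at hy
    exact (pow_le_pow_left₀ hd.le hy 2).trans (norm_sq_le_sumSq _)
  refine tendsto_integral_filter_of_dominated_convergence (fun y => (d ^ 2) ^ a * ‖g y‖) ?_ ?_
    (hg.norm.const_mul _) (.of_forall fun y => ?_)
  · filter_upwards [self_mem_nhdsWithin] with ε (hε : 0 < ε)
    exact (contDiff_sumSq_sub_add_rpow x hε a (n := 0)).continuous.aestronglyMeasurable.smul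
      hg.aestronglyMeasurable
  · filter_upwards [self_mem_nhdsWithin] with ε (hε : 0 < ε)
    refine .of_forall fun y => ?_
    by_cases hy : y ∈ ball x d
    · simp [hgx hy]
    · have hpos := sumSq_add_pos (x - y) hε
      rw [norm_smul, Real.norm_of_nonneg (by positivity)]
      exact mul_le_mul_of_nonneg_right (Real.rpow_le_rpow_of_nonpos (by positivity)
        (by linarith [hdist hy]) ha) (norm_nonneg _)
  · by_cases hy : y ∈ ball x d
    · simp [hgx hy]
    · have hne : sumSq (x - y) + 0 ≠ 0 := by
        rw [add_zero]
        exact ((pow_pos hd 2).trans_le (hdist hy)).ne'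
      have hcont : ContinuousAt (fun ε : ℝ => (sumSq (x - y) + ε) ^ a • g y) 0 :=
        ((continuousAt_const.add continuousAt_id).rpow_const (.inl hne)).smul continuousAt_const
      simpa using hcont.tendsto.mono_left nhdsWithin_le_nhds

/- Apply Green's identity to the regularised kernel `(|x - y|² + ε)^a`. As `ε → 0` its Laplacian
concentrates at `x` as an approximate identity, while off `ball x d` the kernel converges. -/
lemma integral_sumSq_rpow_smul_coordLaplacian [DecidableEq ι] [CompleteSpace F] {a : ℝ}
    (ha : Fintype.card ι = 2 - 2 * a) (ha₀ : a ≤ 0) {u : (ι → ℝ) → F} (hu : ContDiff ℝ 2 u)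
    (hsupp : HasCompactSupport u) {x : ι → ℝ} {d : ℝ} (hd : 0 < d)
    (hux : EqOn (coordLaplacian ℝ u) 0 (ball x d)) :
    ∫ y, sumSq (x - y) ^ a • coordLaplacian ℝ u y =
      (-(4 * a * (a - 1)) * ∫ v : ι → ℝ, (1 + sumSq v) ^ (a - 2)) • u x := by
  have hΔ : Integrable (coordLaplacian ℝ u) :=
    (continuous_coordLaplacian hu).integrable_of_hasCompactSupport
      (hasCompactSupport_coordLaplacian hsupp)
  have hpeak := (tendsto_rpow_smul_integral_sumSq_sub_add_rpow_smul (b := 2 - a)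
    (by rw [ha]; linarith) x (hu.continuous.integrable_of_hasCompactSupport hsupp)
    hu.continuous.continuousAt).const_smul (-(4 * a * (a - 1)))
  rw [neg_sub, smul_smul] at hpeak
  refine tendsto_nhds_unique (tendsto_integral_sumSq_sub_add_rpow_smul ha₀ hd hΔ hux)
    (hpeak.congr' ?_)
  filter_upwards [self_mem_nhdsWithin] with ε (hε : 0 < ε)
  rw [integral_smul_coordLaplacian (contDiff_sumSq_sub_add_rpow x hε a) hu hsupp,
    show (2 - a - Fintype.card ι / 2 : ℝ) = 1 by rw [ha]; ring, Real.rpow_one,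
    ← integral_smul, ← integral_smul]
  simp only [coordLaplacian_sumSq_sub_add_rpow x _ hε ha, smul_smul]

end NewtonianPotential

section ParametricIntegral

variable {𝕜 : Type*} [RCLike 𝕜] {E : Type*} [NormedAddCommGroup E] [NormedSpace 𝕜 E]
  {F : Type*} [NormedAddCommGroup F] [NormedSpace 𝕜 F] [NormedSpace ℝ F]
  {α : Type*} [TopologicalSpace α] [T2Space α] [MeasurableSpace α] [OpensMeasurableSpace α]
  {μ : Measure α} [IsFiniteMeasureOnCompacts μ] {W : Set E} {S : Set α} {h : E → 𝕜} {c : α → E}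
  {g : α → F}

lemma hasFDerivAt_setIntegral_comp_sub_smul [ProperSpace E] (hW : IsOpen W)
    (hh : ContDiffOn 𝕜 1 h W) (hS : IsCompact S) (hc : ContinuousOn c S) (hg : ContinuousOn g S)
    {z : E} (hz : ∀ y ∈ S, z - c y ∈ W) :
    HasFDerivAt (fun z => ∫ y in S, h (z - c y) • g y ∂μ)
      (∫ y in S, (fderiv 𝕜 h (z - c y)).smulRight (g y) ∂μ) z := by
  have hsub (w : E) : ContinuousOn (fun y => w - c y) S := continuousOn_const.sub hc
  have hK : IsCompact ((fun y => z - c y) '' S) := hS.image_of_continuousOn (hsub z)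
  obtain ⟨δ, hδ, hKW⟩ := hK.exists_cthickening_subset_open hW (image_subset_iff.2 hz)
  have hmem (w : E) (hw : w ∈ ball z δ) (y : α) (hy : y ∈ S) :
      w - c y ∈ cthickening δ ((fun y => z - c y) '' S) :=
    mem_cthickening_of_dist_le _ (z - c y) δ _ (mem_image_of_mem _ hy)
      (by simpa using (mem_ball.1 hw).le)
  have hh' : ContinuousOn (fderiv 𝕜 h) W := hh.continuousOn_fderiv_of_isOpen hW le_rfl
  obtain ⟨C, hC⟩ := hK.cthickening.exists_bound_of_continuousOn (hh'.mono hKW)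
  have hint (w : E) (hw : w ∈ ball z δ) : IntegrableOn (fun y => h (w - c y) • g y) S μ :=
    ((hh.continuousOn.comp (hsub w) fun y hy => hKW (hmem w hw y hy)).smul hg).integrableOn_compact
      hS
  have hint' : IntegrableOn (fun y => (fderiv 𝕜 h (z - c y)).smulRight (g y)) S μ :=
    ((ContinuousLinearMap.smulRightL 𝕜 E F).continuous₂.comp_continuousOn
      ((hh'.comp (hsub z) hz).prodMk hg)).integrableOn_compact hS
  refine hasFDerivAt_integral_of_dominated_of_fderiv_le (ball_mem_nhds z hδ)
    (F' := fun w y => (fderiv 𝕜 h (w - c y)).smulRight (g y)) (bound := fun y => C * ‖g y‖)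
    ?_ (hint z (mem_ball_self hδ)) hint'.aestronglyMeasurable ?_ ?_ ?_
  · filter_upwards [ball_mem_nhds z hδ] with w hw using (hint w hw).aestronglyMeasurable
  · filter_upwards [ae_restrict_mem hS.measurableSet] with y hy w hw
    rw [ContinuousLinearMap.norm_smulRight_apply]
    exact mul_le_mul_of_nonneg_right (hC _ (hmem w hw y hy)) (norm_nonneg _)
  · exact (continuousOn_const.mul hg.norm).integrableOn_compact hS
  · filter_upwards [ae_restrict_mem hS.measurableSet] with y hy w hw
    have hdiff : DifferentiableAt 𝕜 h (w - c y) :=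
      (hh.differentiableOn one_ne_zero).differentiableAt (hW.mem_nhds (hKW (hmem w hw y hy)))
    exact (hdiff.hasFDerivAt.comp w ((hasFDerivAt_id w).sub_const (c y))).smul_const (g y)

variable [FiniteDimensional 𝕜 E]

lemma fderiv_setIntegral_comp_sub_smul_apply (hW : IsOpen W)
    (hh : ContDiffOn 𝕜 1 h W) (hS : IsCompact S) (hc : ContinuousOn c S) (hg : ContinuousOn g S)
    {z : E} (hz : ∀ y ∈ S, z - c y ∈ W) (v : E) :
    fderiv 𝕜 (fun z => ∫ y in S, h (z - c y) • g y ∂μ) z v =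
      ∫ y in S, fderiv 𝕜 h (z - c y) v • g y ∂μ := by
  have := FiniteDimensional.proper_rclike 𝕜 E
  have hint : IntegrableOn (fun y => (fderiv 𝕜 h (z - c y)).smulRight (g y)) S μ :=
    ((ContinuousLinearMap.smulRightL 𝕜 E F).continuous₂.comp_continuousOn
      (((hh.continuousOn_fderiv_of_isOpen hW le_rfl).comp (continuousOn_const.sub hc) hz).prodMk
        hg)).integrableOn_compact hS
  rw [(hasFDerivAt_setIntegral_comp_sub_smul hW hh hS hc hg hz).fderiv,
    ContinuousLinearMap.integral_apply hint]
  rfl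

lemma contDiffOn_setIntegral_comp_sub_smul (hW : IsOpen W) (hh : ContDiffOn 𝕜 ∞ h W)
    (hS : IsCompact S) (hc : ContinuousOn c S) (hg : ContinuousOn g S) {B : Set E}
    (hB : IsOpen B) (hBW : ∀ z ∈ B, ∀ y ∈ S, z - c y ∈ W) :
    ContDiffOn 𝕜 ∞ (fun z => ∫ y in S, h (z - c y) • g y ∂μ) B := by
  have := FiniteDimensional.proper_rclike 𝕜 E
  refine contDiffOn_infty.2 fun n => ?_
  induction n generalizing h with
  | zero =>
    exact contDiffOn_zero.2 fun z hz => (hasFDerivAt_setIntegral_comp_sub_smul hW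
      (hh.of_le (by simp)) hS hc hg (hBW z hz)).continuousAt.continuousWithinAt
  | succ n ih =>
    have hh₁ : ContDiffOn 𝕜 1 h W := hh.of_le (by simp)
    rw [Nat.cast_succ]
    refine (contDiffOn_succ_iff_fderiv_of_isOpen hB).2 ⟨fun z hz =>
      (hasFDerivAt_setIntegral_comp_sub_smul hW hh₁ hS hc hg
        (hBW z hz)).differentiableAt.differentiableWithinAt, by simp,
      contDiffOn_clm_apply.2 fun v => ?_⟩
    exact (ih ((hh.fderiv_of_isOpen hW le_rfl).clm_apply contDiffOn_const)).congr
      fun z hz => fderiv_setIntegral_comp_sub_smul_apply hW hh₁ hS hc hg (hBW z hz) v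

end ParametricIntegral

section LocalExtension

lemma exists_contDiff_hasCompactSupport_eqOn_ball {E F : Type*} [NormedAddCommGroup E]
    [NormedSpace ℝ E] [FiniteDimensional ℝ E] [HasContDiffBump E] [NormedAddCommGroup F]
    [NormedSpace ℝ F] {f : E → F} {A : Set E} {n : ℕ∞} (hA : IsOpen A) (hf : ContDiffOn ℝ n f A)
    {x : E} (hx : x ∈ A) :
    ∃ r > 0, ball x r ⊆ A ∧
      ∃ u : E → F, ContDiff ℝ n u ∧ HasCompactSupport u ∧ EqOn u f (ball x r) := by
  obtain ⟨R, hR, hRA⟩ := nhds_basis_closedBall.mem_iff.1 (hA.mem_nhds hx)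
  let χ : ContDiffBump x := ⟨R / 2, R, half_pos hR, half_lt_self hR⟩
  have hsupp : tsupport (fun y => χ y • f y) ⊆ A :=
    (tsupport_smul_subset_left _ _).trans (χ.tsupport_eq.trans_subset hRA)
  refine ⟨R / 2, half_pos hR, fun y hy => hRA ?_, fun y => χ y • f y,
    contDiff_iff_contDiffAt.2 fun y => ?_, χ.hasCompactSupport.smul_right, fun y hy => ?_⟩
  · exact (ball_subset_closedBall.trans (closedBall_subset_closedBall (half_le_self hR.le))) hy
  · by_cases hy : y ∈ tsupport fun y => χ y • f y
    · exact χ.contDiff.contDiffAt.smul (hf.contDiffAt (hA.mem_nhds (hsupp hy)))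
    · exact contDiffAt_const.congr_of_eventuallyEq (notMem_tsupport_iff_eventuallyEq.1 hy)
  · simp [χ.one_of_mem_closedBall (ball_subset_closedBall hy)]

variable {ι : Type*} [Fintype ι]

lemma re_sumSq_sub_ofRealPi_pos {x y : ι → ℝ} {z : ι → ℂ} {r δ : ℝ}
    (hδ : (Fintype.card ι + 1) * δ ≤ r) (hz : z ∈ ball (ofRealPi x) δ) (hy : y ∉ ball x r) :
    0 < (sumSq (z - ofRealPi y)).re := by
  have hδ₀ : 0 < δ := pos_of_mem_ball hz
  have hre : Fintype.card ι * δ < ‖rePi z - y‖ := by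
    have hxz := rePi_mem_ball hz
    rw [mem_ball'] at hxz
    rw [mem_ball', not_lt] at hy
    rw [← dist_eq_norm]
    linarith [dist_triangle x (rePi z) y]
  have hcard : (Fintype.card ι : ℝ) ≤ Fintype.card ι ^ 2 := mod_cast Nat.le_self_pow two_ne_zero _
  have him : sumSq (imPi z) < sumSq (rePi z - y) := calc
    sumSq (imPi z) ≤ Fintype.card ι * ‖imPi z‖ ^ 2 := sumSq_le_card_mul_norm_sq _
    _ ≤ Fintype.card ι ^ 2 * δ ^ 2 := by gcongr; exact (norm_imPi_lt_of_mem_ball hz).le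
    _ = (Fintype.card ι * δ) ^ 2 := (mul_pow _ _ _).symm
    _ < ‖rePi z - y‖ ^ 2 := by gcongr
    _ ≤ sumSq (rePi z - y) := norm_sq_le_sumSq _
  simpa [re_sumSq] using him

lemma isOpen_re_sumSq_pos : IsOpen {z : ι → ℂ | 0 < (sumSq z).re} :=
  isOpen_lt continuous_const (Complex.continuous_re.comp (contDiff_sumSq (n := 0)).continuous)

lemma contDiffOn_sumSq_cpow (a : ℂ) {n : ℕ∞ω} :
    ContDiffOn ℂ n (fun z : ι → ℂ => sumSq z ^ a) {z | 0 < (sumSq z).re} := fun _z hz =>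
  (((contDiff_sumSq (n := ω)).contDiffAt.analyticAt.cpow analyticAt_const
    (.inl hz)).contDiffAt).contDiffWithinAt

lemma sumSq_ofRealPi_cpow (v : ι → ℝ) (a : ℝ) :
    sumSq (ofRealPi v) ^ (a : ℂ) = ((sumSq v ^ a : ℝ) : ℂ) := by
  rw [sumSq_ofRealPi, Complex.ofReal_cpow (sumSq_nonneg v)]

variable [DecidableEq ι] {F : Type*} [NormedAddCommGroup F] [NormedSpace ℂ F] [CompleteSpace F]

/- Off the support of `Δu`, the Newtonian potential representation `u = C⁻¹ ∫ |· - y|^(2 - n) Δu(y)`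
makes sense at complex points as well. -/
lemma exists_isHolomorphicExtension_ball (hι : 3 ≤ Fintype.card ι) {u : (ι → ℝ) → F}
    (hu : ContDiff ℝ 2 u) (hsupp : HasCompactSupport u) {x : ι → ℝ} {r δ : ℝ}
    (hux : EqOn (coordLaplacian ℝ u) 0 (ball x r)) (hδ : (Fintype.card ι + 1) * δ ≤ r) :
    ∃ Φ, IsHolomorphicExtension Φ (ball (ofRealPi x) δ) u (ball x δ) := by
  have hι' : (3 : ℝ) ≤ Fintype.card ι := mod_cast hι
  obtain ⟨a, ha⟩ : ∃ a : ℝ, Fintype.card ι = 2 - 2 * a := ⟨1 - Fintype.card ι / 2, by ring⟩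
  have ha₀ : a < 0 := by linarith
  let S := tsupport u \ ball x r
  have hS : IsCompact S := hsupp.isCompact.diff isOpen_ball
  have hΔS (y : ι → ℝ) (hy : y ∉ S) : coordLaplacian ℝ u y = 0 := by
    by_cases hyr : y ∈ ball x r
    · exact hux hyr
    · exact coordLaplacian_eq_zero_of_notMem_tsupport fun hyu => hy ⟨hyu, hyr⟩
  let C : ℝ := -(4 * a * (a - 1)) * ∫ v : ι → ℝ, (1 + sumSq v) ^ (a - 2)
  have hC : C ≠ 0 := by
    have hpos := integral_one_add_sumSq_rpow_pos (ι := ι) (b := 2 - a) (by linarith)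
    rw [neg_sub] at hpos
    have hcoef : 0 < a * (a - 1) := mul_pos_of_neg_of_neg ha₀ (by linarith)
    exact mul_ne_zero (by linarith) hpos.ne'
  let Ψ : (ι → ℂ) → F := fun z =>
    ∫ y in S, sumSq (z - ofRealPi y) ^ (a : ℂ) • coordLaplacian ℝ u y
  have hΨ : ContDiffOn ℂ ∞ Ψ (ball (ofRealPi x) δ) :=
    contDiffOn_setIntegral_comp_sub_smul isOpen_re_sumSq_pos (contDiffOn_sumSq_cpow a) hS
      ofRealPi.continuous.continuousOn (continuous_coordLaplacian hu).continuousOn isOpen_ball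
      fun z hz y hy => re_sumSq_sub_ofRealPi_pos hδ hz hy.2
  have hreal (y : ι → ℝ) (hy : y ∈ ball x δ) : Ψ (ofRealPi y) = C • u y := by
    have hδr : δ ≤ r := (le_mul_of_one_le_left (pos_of_mem_ball hy).le (by simp)).trans hδ
    have hyr : 0 < r - dist y x := sub_pos.2 ((mem_ball.1 hy).trans_le hδr)
    rw [← integral_sumSq_rpow_smul_coordLaplacian ha ha₀.le hu hsupp hyr
      (hux.mono (ball_subset_ball' (by simp)))]
    change ∫ w in S, _ = _
    rw [setIntegral_eq_integral_of_forall_compl_eq_zero fun w hw => by rw [hΔS w hw, smul_zero]]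
    simp only [← map_sub, sumSq_ofRealPi_cpow, Complex.coe_smul]
  exact ⟨fun z => C⁻¹ • Ψ z, isOpen_ball, .ball x δ, by ext; exact ofRealPi_mem_ball_iff,
    hΨ.const_smul _, fun y hy => by simp [hreal y hy, hC]⟩

lemma exists_isHolomorphicExtension_of_three_le_card (hι : 3 ≤ Fintype.card ι) {A : Set (ι → ℝ)}
    (hA : IsOpen A) {φ : (ι → ℝ) → F} (hφ : ContDiffOn ℝ 2 φ A)
    (hlap : ∀ x ∈ A, coordLaplacian ℝ φ x = 0) :
    ∃ Φ Ω, IsHolomorphicExtension Φ Ω φ A := by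
  refine exists_isHolomorphicExtension_of_locally fun x hx => ?_
  obtain ⟨r, hr, hrA, u, hu, hsupp, huφ⟩ :=
    exists_contDiff_hasCompactSupport_eqOn_ball hA (n := 2) hφ hx
  have hux : EqOn (coordLaplacian ℝ u) 0 (ball x r) := fun y hy =>
    (coordLaplacian_congr_nhds (huφ.eventuallyEq_of_mem (isOpen_ball.mem_nhds hy))).trans
      (hlap y (hrA hy))
  obtain ⟨δ, hδ₀, hδr, hδ⟩ : ∃ δ > 0, δ ≤ r ∧ (Fintype.card ι + 1) * δ ≤ r :=
    ⟨r / (Fintype.card ι + 1), by positivity, div_le_self hr.le (by simp),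
      (mul_div_cancel₀ r (by positivity)).le⟩
  obtain ⟨Φ, hΦ⟩ := exists_isHolomorphicExtension_ball hι hu hsupp hux hδ
  have hδφ := huφ.mono (ball_subset_ball hδr)
  exact ⟨ball x δ, (ball_subset_ball hδr).trans hrA, mem_ball_self hδ₀, Φ, _,
    { hΦ with eqOn := hΦ.eqOn.trans hδφ }⟩

end LocalExtension

section FictitiousVariables

variable {ι κ : Type*} {F : Type*} [NormedAddCommGroup F]

/-- The projection `𝕜^(ι ⊕ κ) → 𝕜^ι` onto the coordinates indexed by `ι`. Composing with it makes a
function on `𝕜^ι` depend on fictitious variables indexed by `κ`. -/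
def projInl (𝕜 : Type*) [NontriviallyNormedField 𝕜] (ι κ : Type*) :
    (ι ⊕ κ → 𝕜) →L[𝕜] (ι → 𝕜) :=
  ContinuousLinearMap.pi fun i => ContinuousLinearMap.proj (Sum.inl i)

/-- The inclusion of `𝕜^ι` in `𝕜^(ι ⊕ κ)` as the subspace where the coordinates indexed by `κ`
vanish. -/
def inclInl (𝕜 : Type*) [NontriviallyNormedField 𝕜] (ι κ : Type*) :
    (ι → 𝕜) →L[𝕜] (ι ⊕ κ → 𝕜) :=
  ContinuousLinearMap.pi (Sum.elim (fun i => ContinuousLinearMap.proj i) 0)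

section Laplacian

variable {𝕜 : Type*} [NontriviallyNormedField 𝕜] [NormedSpace 𝕜 F] [DecidableEq ι] [DecidableEq κ]

lemma projInl_single_inl (i : ι) : projInl 𝕜 ι κ (Pi.single (Sum.inl i) 1) = Pi.single i 1 := by
  ext j
  simp [projInl, Pi.single_apply]

lemma projInl_single_inr (k : κ) : projInl 𝕜 ι κ (Pi.single (Sum.inr k) 1) = 0 := by
  ext j
  simp [projInl]

variable {f : (ι → 𝕜) → F} {w : ι ⊕ κ → 𝕜}

lemma partialDeriv_inl_comp_projInl [Finite ι] [Finite κ] (i : ι)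
    (hf : DifferentiableAt 𝕜 f (projInl 𝕜 ι κ w)) :
    partialDeriv 𝕜 (Sum.inl i) (f ∘ projInl 𝕜 ι κ) w = partialDeriv 𝕜 i f (projInl 𝕜 ι κ w) := by
  cases nonempty_fintype ι
  cases nonempty_fintype κ
  rw [partialDeriv, (hf.hasFDerivAt.comp w (projInl 𝕜 ι κ).hasFDerivAt).fderiv,
    ContinuousLinearMap.comp_apply, projInl_single_inl]
  rfl

lemma partialDeriv_inr_comp_projInl [Finite ι] [Finite κ] (k : κ)
    (hf : DifferentiableAt 𝕜 f (projInl 𝕜 ι κ w)) :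
    partialDeriv 𝕜 (Sum.inr k) (f ∘ projInl 𝕜 ι κ) w = 0 := by
  cases nonempty_fintype ι
  cases nonempty_fintype κ
  rw [partialDeriv, (hf.hasFDerivAt.comp w (projInl 𝕜 ι κ).hasFDerivAt).fderiv,
    ContinuousLinearMap.comp_apply, projInl_single_inr, map_zero]

lemma coordLaplacian_comp_projInl [Fintype ι] [Fintype κ] {A : Set (ι → 𝕜)}
    (hA : IsOpen A) (hf : ContDiffOn 𝕜 2 f A) (hw : projInl 𝕜 ι κ w ∈ A) :
    coordLaplacian 𝕜 (f ∘ projInl 𝕜 ι κ) w = coordLaplacian 𝕜 f (projInl 𝕜 ι κ w) := by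
  have hdiff : ∀ᶠ v in 𝓝 w, DifferentiableAt 𝕜 f (projInl 𝕜 ι κ v) := by
    filter_upwards [(hA.preimage (projInl 𝕜 ι κ).continuous).mem_nhds hw] with v hv
    exact (hf.differentiableOn two_ne_zero).differentiableAt (hA.mem_nhds hv)
  have hinl (i : ι) :
      partialDeriv 𝕜 (Sum.inl i) (partialDeriv 𝕜 (Sum.inl i) (f ∘ projInl 𝕜 ι κ)) w =
        partialDeriv 𝕜 i (partialDeriv 𝕜 i f) (projInl 𝕜 ι κ w) := by
    have hfirst : partialDeriv 𝕜 (Sum.inl i) (f ∘ projInl 𝕜 ι κ) =ᶠ[𝓝 w]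
        partialDeriv 𝕜 i f ∘ projInl 𝕜 ι κ :=
      hdiff.mono fun v hv => partialDeriv_inl_comp_projInl i hv
    rw [(partialDeriv_congr_nhds _ hfirst).eq_of_nhds]
    exact partialDeriv_inl_comp_projInl i (((contDiffOn_partialDeriv i hf hA
      one_add_one_eq_two.le).differentiableOn one_ne_zero).differentiableAt (hA.mem_nhds hw))
  have hinr (k : κ) :
      partialDeriv 𝕜 (Sum.inr k) (partialDeriv 𝕜 (Sum.inr k) (f ∘ projInl 𝕜 ι κ)) w = 0 := by
    have hfirst : partialDeriv 𝕜 (Sum.inr k) (f ∘ projInl 𝕜 ι κ) =ᶠ[𝓝 w] fun _ => 0 :=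
      hdiff.mono fun v hv => partialDeriv_inr_comp_projInl k hv
    rw [(partialDeriv_congr_nhds _ hfirst).eq_of_nhds, partialDeriv, fderiv_fun_const]
    rfl
  simp only [coordLaplacian, Fintype.sum_sum_type, hinl, hinr, Finset.sum_const_zero, add_zero]

end Laplacian

lemma inclInl_ofRealPi (x : ι → ℝ) : inclInl ℂ ι κ (ofRealPi x) = ofRealPi (inclInl ℝ ι κ x) := by
  ext (i | k) <;> simp [inclInl]

lemma rePi_inclInl (z : ι → ℂ) : rePi (inclInl ℂ ι κ z) = inclInl ℝ ι κ (rePi z) := by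
  ext (i | k) <;> simp [inclInl]

lemma projInl_inclInl {𝕜 : Type*} [NontriviallyNormedField 𝕜] (x : ι → 𝕜) :
    projInl 𝕜 ι κ (inclInl 𝕜 ι κ x) = x := rfl

lemma IsVerticallyStarShaped.preimage_inclInl {Ω : Set (ι ⊕ κ → ℂ)}
    (h : IsVerticallyStarShaped Ω) : IsVerticallyStarShaped (inclInl ℂ ι κ ⁻¹' Ω) := by
  rintro z hz _ ⟨a, b, ha, hb, hab, rfl⟩
  refine h _ hz ⟨a, b, ha, hb, hab, ?_⟩
  rw [rePi_inclInl, ← inclInl_ofRealPi, map_add, ContinuousLinearMap.map_smul_of_tower,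
    ContinuousLinearMap.map_smul_of_tower]

lemma IsHolomorphicExtension.comp_inclInl [Fintype ι] [Fintype κ] [NormedSpace ℂ F]
    {φ : (ι → ℝ) → F} {A : Set (ι → ℝ)} {Φ : (ι ⊕ κ → ℂ) → F} {Ω : Set (ι ⊕ κ → ℂ)}
    (h : IsHolomorphicExtension Φ Ω (φ ∘ projInl ℝ ι κ) (projInl ℝ ι κ ⁻¹' A)) :
    IsHolomorphicExtension (Φ ∘ inclInl ℂ ι κ) (inclInl ℂ ι κ ⁻¹' Ω) φ A where
  isOpen := h.isOpen.preimage (inclInl ℂ ι κ).continuous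
  isVerticallyStarShaped := h.isVerticallyStarShaped.preimage_inclInl
  preimage_ofRealPi := by
    ext x
    rw [mem_preimage, mem_preimage, inclInl_ofRealPi, ← mem_preimage, h.preimage_ofRealPi,
      mem_preimage, projInl_inclInl]
  contDiffOn := h.contDiffOn.comp (inclInl ℂ ι κ).contDiff.contDiffOn (mapsTo_preimage _ _)
  eqOn x hx := by
    rw [Function.comp_apply, Function.comp_apply, inclInl_ofRealPi]
    exact h.eqOn (x := inclInl ℝ ι κ x) hx

end FictitiousVariables

section Main

variable {ι : Type*} [Fintype ι] [DecidableEq ι]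

lemma exists_isHolomorphicExtension {F : Type*} [NormedAddCommGroup F] [NormedSpace ℂ F]
    [CompleteSpace F] {A : Set (ι → ℝ)} (hA : IsOpen A) {φ : (ι → ℝ) → F}
    (hφ : ContDiffOn ℝ 2 φ A) (hlap : ∀ x ∈ A, coordLaplacian ℝ φ x = 0) :
    ∃ Φ Ω, IsHolomorphicExtension Φ Ω φ A := by
  have hcard : 3 ≤ Fintype.card (ι ⊕ Fin 3) := by simp
  obtain ⟨Φ, Ω, hΦ⟩ := exists_isHolomorphicExtension_of_three_le_card hcard
    (hA.preimage (projInl ℝ ι (Fin 3)).continuous)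
    (hφ.comp (projInl ℝ ι (Fin 3)).contDiff.contDiffOn (mapsTo_preimage _ _))
    fun w hw => (coordLaplacian_comp_projInl hA hφ hw).trans (hlap _ hw)
  exact ⟨_, _, hΦ.comp_inclInl⟩

theorem harmonic_morphism_extends_to_complex_harmonic_morphism_general
    {A : Set (ι → ℝ)} (hA : IsOpen A) {φ : (ι → ℝ) → ℂ} (hφ : ContDiffOn ℝ 2 φ A)
    (hlap : ∀ x ∈ A, coordLaplacian ℝ φ x = 0)
    (hconf : ∀ x ∈ A, ∑ i, partialDeriv ℝ i φ x ^ 2 = 0) :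
    ∃ Ω : Set (ι → ℂ), IsOpen Ω ∧ ofRealPi '' A ⊆ Ω ∧
      ∃ Φ : (ι → ℂ) → ℂ, DifferentiableOn ℂ Φ Ω ∧ (∀ x ∈ A, Φ (ofRealPi x) = φ x) ∧
        (∀ z ∈ Ω, coordLaplacian ℂ Φ z = 0) ∧
        (∀ z ∈ Ω, ∑ i, partialDeriv ℂ i Φ z ^ 2 = 0) := by
  obtain ⟨Φ, Ω, hΦ⟩ := exists_isHolomorphicExtension hA hφ hlap
  exact ⟨Ω, hΦ.isOpen, image_subset_iff.2 hΦ.preimage_ofRealPi.ge, Φ, hΦ.differentiableOn,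
    hΦ.eqOn, hΦ.coordLaplacian_eq_zero hlap, hΦ.sum_partialDeriv_sq_eq_zero hconf⟩

end Main

/-- Proposition 7.3(ii), Euclidean case: every smooth harmonic morphism `φ` from an open
subset of `ℝ⁴` to `ℂ` is the restriction to the real points of a complex-harmonic morphism
`Φ` on an open subset of `ℂ⁴`. -/
theorem harmonic_morphism_extends_to_complex_harmonic_morphism
    (A : Set (Fin 4 → ℝ)) (hA : IsOpen A)
    (φ : (Fin 4 → ℝ) → ℂ) (hφ : ContDiffOn ℝ (⊤ : ℕ∞) φ A)
    (hlap : ∀ x ∈ A, ∑ i : Fin 4, pd i (pd i φ) x = 0)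
    (hconf : ∀ x ∈ A, ∑ i : Fin 4, (pd i φ x) ^ 2 = 0) :
    ∃ Ω : Set (Fin 4 → ℂ), IsOpen Ω ∧ iotaR '' A ⊆ Ω ∧
      ∃ Φ : (Fin 4 → ℂ) → ℂ, DifferentiableOn ℂ Φ Ω ∧
        (∀ x ∈ A, Φ (iotaR x) = φ x) ∧
        (∀ z ∈ Ω, ∑ i : Fin 4, pdC i (pdC i Φ) z = 0) ∧
        (∀ z ∈ Ω, ∑ i : Fin 4, (pdC i Φ z) ^ 2 = 0) := by
  have hφ₂ : ContDiffOn ℝ 2 φ A := hφ.of_le (WithTop.coe_le_coe.2 le_top)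
  exact harmonic_morphism_extends_to_complex_harmonic_morphism_general hA hφ₂ hlap hconf

end
end

section
/- Let U be an open subset of ℝ⁴ (coordinates (t,x₁,x₂,x₃)) and let φ : U → ℂ be smooth, satisfying on U: −(∂_tφ)² + (∂₁φ)² + (∂₂φ)² + (∂₃φ)² = 0 and −∂_t²φ + ∂₁²φ + ∂₂²φ + ∂₃²φ = 0. Set ∂_v = ½(∂_t + ∂₁), ∂_w = ½(∂₁ − ∂_t), ∂_z = ½(∂₂ − i∂₃), ∂_{z̄} = ½(∂₂ + i∂₃). Let p ∈ U satisfy ∂_vφ(p) = ∂_wφ(p) = ∂_{z̄}φ(p) = 0 and ∂_zφ(p) ≠ 0. Then: (i) all first-order derivatives of ∂_{z̄}φ vanish at p, i.e. ∂_v∂_{z̄}φ(p) = ∂_w∂_{z̄}φ(p) = ∂_z∂_{z̄}φ(p) = ∂_{z̄}∂_{z̄}φ(p) = 0; and (ii) (∂_v∂_vφ(p))·(∂_w∂_wφ(p)) = 0. -/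
noncomputable section

/-- The null-coordinate derivative `∂_v = ½(∂_t + ∂₁)`. -/
def Dv (f : (Fin 4 → ℝ) → ℂ) : (Fin 4 → ℝ) → ℂ := fun x => (pd 0 f x + pd 1 f x) / 2

/-- The null-coordinate derivative `∂_w = ½(∂₁ − ∂_t)`. -/
def Dw (f : (Fin 4 → ℝ) → ℂ) : (Fin 4 → ℝ) → ℂ := fun x => (pd 1 f x - pd 0 f x) / 2

/-- The derivative `∂_z = ½(∂₂ − i∂₃)`. -/
def Dz (f : (Fin 4 → ℝ) → ℂ) : (Fin 4 → ℝ) → ℂ :=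
  fun x => (pd 2 f x - Complex.I * pd 3 f x) / 2

/-- The derivative `∂_{z̄} = ½(∂₂ + i∂₃)`. -/
def Dzb (f : (Fin 4 → ℝ) → ℂ) : (Fin 4 → ℝ) → ℂ :=
  fun x => (pd 2 f x + Complex.I * pd 3 f x) / 2

/-!
Write `f_ξ` for the derivative of `f` along a constant complex vector field `ξ`, and `b` for
`∂_{z̄}`. Differentiating `f_v f_w + f_z f_b = 0` once at `p`, where only `f_z` among its factors
is nonzero, gives `f_z f_bξ = 0`, hence `f_bξ = 0`, for all `ξ`; the wave equation then gives
`f_vw = 0` at `p`. Differentiating the first equation along `v, w` and along `b, z` leaves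
`f_vv f_ww + f_z f_bvw = 0` and `f_z f_bzb = 0` at `p`. The wave equation differentiated along `b`
reads `f_bvw + f_bzb = 0`, and so `f_vv f_ww = 0`.
-/

open Filter
open scoped ContDiff Topology TensorProduct

section DirDeriv

variable {𝕜 E A : Type*} [NontriviallyNormedField 𝕜] [NormedAddCommGroup E] [NormedSpace 𝕜 E]
  [NormedCommRing A] [NormedAlgebra 𝕜 A] {f g : E → A} {x : E}

/-- The derivative of `f : E → A` along the constant vector field `ξ` with coefficients in `A`.
For `A = ℂ` and `𝕜 = ℝ` this is differentiation along a complex vector field such as `∂_z`: an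
element of `ℂ ⊗[ℝ] E` is a complexified tangent vector, and `fderiv ℝ f x` is extended to it
`ℂ`-linearly. -/
def dirDeriv (ξ : A ⊗[𝕜] E) (f : E → A) (x : E) : A :=
  (fderiv 𝕜 f x : E →ₗ[𝕜] A).liftBaseChange A ξ

lemma dirDeriv_tmul (a : A) (e : E) (f : E → A) :
    dirDeriv (a ⊗ₜ[𝕜] e) f = fun x ↦ a * fderiv 𝕜 f x e := rfl

lemma dirDeriv_zero_left (f : E → A) : dirDeriv (0 : A ⊗[𝕜] E) f = 0 :=
  funext fun _ ↦ map_zero _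

lemma dirDeriv_add_left (ξ η : A ⊗[𝕜] E) (f : E → A) :
    dirDeriv (ξ + η) f = dirDeriv ξ f + dirDeriv η f :=
  funext fun _ ↦ map_add _ ξ η

lemma dirDeriv_sub_left (ξ η : A ⊗[𝕜] E) (f : E → A) :
    dirDeriv (ξ - η) f = dirDeriv ξ f - dirDeriv η f :=
  funext fun _ ↦ map_sub _ ξ η

lemma dirDeriv_smul_left (a : A) (ξ : A ⊗[𝕜] E) (f : E → A) :
    dirDeriv (a • ξ) f = a • dirDeriv ξ f :=
  funext fun _ ↦ map_smul _ a ξ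

lemma dirDeriv_zero_right (ξ : A ⊗[𝕜] E) (x : E) : dirDeriv ξ (0 : E → A) x = 0 := by
  simp [dirDeriv, LinearMap.liftBaseChange]

lemma dirDeriv_add_right (ξ : A ⊗[𝕜] E) (hf : DifferentiableAt 𝕜 f x)
    (hg : DifferentiableAt 𝕜 g x) : dirDeriv ξ (f + g) x = dirDeriv ξ f x + dirDeriv ξ g x := by
  simp [dirDeriv, LinearMap.liftBaseChange, fderiv_add hf hg]

lemma dirDeriv_sub_right (ξ : A ⊗[𝕜] E) (hf : DifferentiableAt 𝕜 f x)
    (hg : DifferentiableAt 𝕜 g x) : dirDeriv ξ (f - g) x = dirDeriv ξ f x - dirDeriv ξ g x := by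
  simp [dirDeriv, LinearMap.liftBaseChange, fderiv_sub hf hg]

lemma dirDeriv_smul_right (ξ : A ⊗[𝕜] E) (a : A) (hf : DifferentiableAt 𝕜 f x) :
    dirDeriv ξ (a • f) x = a * dirDeriv ξ f x := by
  simp [dirDeriv, LinearMap.liftBaseChange, fderiv_const_smul hf]

lemma dirDeriv_mul (ξ : A ⊗[𝕜] E) (hf : DifferentiableAt 𝕜 f x) (hg : DifferentiableAt 𝕜 g x) :
    dirDeriv ξ (f * g) x = dirDeriv ξ f x * g x + f x * dirDeriv ξ g x := by
  simp only [dirDeriv, LinearMap.liftBaseChange, fderiv_mul hf hg,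
    ContinuousLinearMap.toLinearMap_add, ContinuousLinearMap.toLinearMap_smul, map_add, map_smul,
    LinearMap.add_apply, LinearMap.smul_apply, smul_eq_mul]
  ring

lemma dirDeriv_congr (ξ : A ⊗[𝕜] E) (hfg : f =ᶠ[𝓝 x] g) :
    dirDeriv ξ f x = dirDeriv ξ g x := by
  rw [dirDeriv, hfg.fderiv_eq, dirDeriv]

lemma contDiffAt_dirDeriv {n : ℕ∞ω} (ξ : A ⊗[𝕜] E) (hf : ContDiffAt 𝕜 (n + 1) f x) :
    ContDiffAt 𝕜 n (dirDeriv ξ f) x := by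
  induction ξ with
  | zero => exact dirDeriv_zero_left (𝕜 := 𝕜) f ▸ contDiffAt_const
  | tmul a e => exact contDiffAt_const.mul (hf.fderiv_right_succ.clm_apply contDiffAt_const)
  | add ξ η hξ hη => exact dirDeriv_add_left ξ η f ▸ hξ.add hη

lemma differentiableAt_dirDeriv (ξ : A ⊗[𝕜] E) (hf : ContDiffAt 𝕜 2 f x) :
    DifferentiableAt 𝕜 (dirDeriv ξ f) x :=
  (contDiffAt_dirDeriv (n := 1) ξ hf).differentiableAt one_ne_zero

lemma dirDeriv_tmul_dirDeriv_tmul (a b : A) (d e : E) (hf : ContDiffAt 𝕜 2 f x) :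
    dirDeriv (a ⊗ₜ[𝕜] d) (dirDeriv (b ⊗ₜ[𝕜] e) f) x =
      a * (b * fderiv 𝕜 (fderiv 𝕜 f) x d e) := by
  have hf' : DifferentiableAt 𝕜 (fderiv 𝕜 f) x :=
    (hf.fderiv_right_succ (n := 1)).differentiableAt one_ne_zero
  have hfe : DifferentiableAt 𝕜 (fun y ↦ fderiv 𝕜 f y e) x :=
    hf'.clm_apply (differentiableAt_const e)
  simp [dirDeriv_tmul, fderiv_const_mul hfe, fderiv_clm_apply hf' (differentiableAt_const e)]

lemma dirDeriv_comm [IsRCLikeNormedField 𝕜] (ξ η : A ⊗[𝕜] E) (hf : ContDiffAt 𝕜 2 f x) :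
    dirDeriv ξ (dirDeriv η f) x = dirDeriv η (dirDeriv ξ f) x := by
  have hsymm : IsSymmSndFDerivAt 𝕜 f x :=
    hf.isSymmSndFDerivAt minSmoothness_of_isRCLikeNormedField.le
  induction ξ with
  | zero => simp only [dirDeriv_zero_left, dirDeriv_zero_right, Pi.zero_apply]
  | add ξ₁ ξ₂ h₁ h₂ =>
    simp only [dirDeriv_add_left, Pi.add_apply, h₁, h₂,
      dirDeriv_add_right η (differentiableAt_dirDeriv ξ₁ hf) (differentiableAt_dirDeriv ξ₂ hf)]
  | tmul a d =>
    induction η with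
    | zero => simp only [dirDeriv_zero_left, dirDeriv_zero_right, Pi.zero_apply]
    | add η₁ η₂ h₁ h₂ =>
      simp only [dirDeriv_add_left, Pi.add_apply, h₁, h₂,
        dirDeriv_add_right (a ⊗ₜ[𝕜] d) (differentiableAt_dirDeriv η₁ hf)
          (differentiableAt_dirDeriv η₂ hf)]
    | tmul b e =>
      rw [dirDeriv_tmul_dirDeriv_tmul a b d e hf, dirDeriv_tmul_dirDeriv_tmul b a e d hf,
        hsymm d e, mul_left_comm]

lemma dirDeriv_smul_dirDeriv_smul (a b : A) (ξ η : A ⊗[𝕜] E) (hf : ContDiffAt 𝕜 2 f x) :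
    dirDeriv (a • ξ) (dirDeriv (b • η) f) x = a * b * dirDeriv ξ (dirDeriv η f) x := by
  rw [dirDeriv_smul_left, dirDeriv_smul_left, Pi.smul_apply,
    dirDeriv_smul_right ξ b (differentiableAt_dirDeriv η hf), smul_eq_mul, mul_assoc]

lemma dirDeriv_add_dirDeriv_sub [IsRCLikeNormedField 𝕜] (ξ η : A ⊗[𝕜] E)
    (hf : ContDiffAt 𝕜 2 f x) :
    dirDeriv (ξ + η) (dirDeriv (ξ - η) f) x =
      dirDeriv ξ (dirDeriv ξ f) x - dirDeriv η (dirDeriv η f) x := by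
  have hξ := differentiableAt_dirDeriv ξ hf
  have hη := differentiableAt_dirDeriv η hf
  rw [dirDeriv_add_left, dirDeriv_sub_left, Pi.add_apply, dirDeriv_sub_right ξ hξ hη,
    dirDeriv_sub_right η hξ hη, dirDeriv_comm η ξ hf]
  ring

lemma dirDeriv_dirDeriv_mul (ξ η : A ⊗[𝕜] E) (hf : ContDiffAt 𝕜 2 f x)
    (hg : ContDiffAt 𝕜 2 g x) :
    dirDeriv ξ (dirDeriv η (f * g)) x =
      dirDeriv ξ (dirDeriv η f) x * g x + dirDeriv η f x * dirDeriv ξ g x +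
        (dirDeriv ξ f x * dirDeriv η g x + f x * dirDeriv ξ (dirDeriv η g) x) := by
  have hη : dirDeriv η (f * g) =ᶠ[𝓝 x] dirDeriv η f * g + f * dirDeriv η g := by
    filter_upwards [hf.eventually (by simp), hg.eventually (by simp)] with y hfy hgy
    exact dirDeriv_mul η (hfy.differentiableAt two_ne_zero) (hgy.differentiableAt two_ne_zero)
  have hf₁ := hf.differentiableAt two_ne_zero
  have hg₁ := hg.differentiableAt two_ne_zero
  have hf₂ := differentiableAt_dirDeriv η hf
  have hg₂ := differentiableAt_dirDeriv η hg
  rw [dirDeriv_congr ξ hη, dirDeriv_add_right ξ (hf₂.mul hg₁) (hf₁.mul hg₂),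
    dirDeriv_mul ξ hf₂ hg₁, dirDeriv_mul ξ hf₁ hg₂]

lemma dirDeriv_add_eq_zero (ξ : A ⊗[𝕜] E) (hf : DifferentiableAt 𝕜 f x)
    (hg : DifferentiableAt 𝕜 g x) (h : f + g =ᶠ[𝓝 x] 0) :
    dirDeriv ξ f x + dirDeriv ξ g x = 0 := by
  rw [← dirDeriv_add_right ξ hf hg, dirDeriv_congr ξ h, dirDeriv_zero_right]

lemma dirDeriv_dirDeriv_add_eq_zero (ξ η : A ⊗[𝕜] E) (hf : ContDiffAt 𝕜 2 f x)
    (hg : ContDiffAt 𝕜 2 g x) (h : f + g =ᶠ[𝓝 x] 0) :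
    dirDeriv ξ (dirDeriv η f) x + dirDeriv ξ (dirDeriv η g) x = 0 := by
  refine dirDeriv_add_eq_zero ξ (differentiableAt_dirDeriv η hf) (differentiableAt_dirDeriv η hg) ?_
  filter_upwards [hf.eventually (by simp), hg.eventually (by simp), h.eventuallyEq_nhds]
    with y hfy hgy hy
  exact dirDeriv_add_eq_zero η (hfy.differentiableAt two_ne_zero)
    (hgy.differentiableAt two_ne_zero) hy

end DirDeriv

section NullFrame

variable {𝕜 E A : Type*} [NontriviallyNormedField 𝕜] [NormedAddCommGroup E] [NormedSpace 𝕜 E]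
  [NormedCommRing A] [NormedAlgebra 𝕜 A] {f : E → A} {p : E} {v w z b : A ⊗[𝕜] E}

theorem dirDeriv_dirDeriv_eq_zero_of_conformal [NoZeroDivisors A] (hf : ContDiffAt 𝕜 2 f p)
    (hconf : dirDeriv v f * dirDeriv w f + dirDeriv z f * dirDeriv b f =ᶠ[𝓝 p] 0)
    (hv : dirDeriv v f p = 0) (hw : dirDeriv w f p = 0) (hb : dirDeriv b f p = 0)
    (hz : dirDeriv z f p ≠ 0) (ξ : A ⊗[𝕜] E) : dirDeriv ξ (dirDeriv b f) p = 0 := by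
  have hd := fun η : A ⊗[𝕜] E ↦ differentiableAt_dirDeriv η hf
  have hξ : dirDeriv z f p * dirDeriv ξ (dirDeriv b f) p = 0 := by
    simpa [dirDeriv_mul ξ (hd _) (hd _), hv, hw, hb] using
      dirDeriv_add_eq_zero ξ ((hd v).mul (hd w)) ((hd z).mul (hd b)) hconf
  exact (mul_eq_zero.mp hξ).resolve_left hz

lemma dirDeriv_mul_add_mul_dirDeriv_eq_zero_of_conformal (hf : ContDiffAt 𝕜 3 f p)
    (hconf : dirDeriv v f * dirDeriv w f + dirDeriv z f * dirDeriv b f =ᶠ[𝓝 p] 0)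
    (hv : dirDeriv v f p = 0) (hw : dirDeriv w f p = 0) (hb : dirDeriv b f p = 0)
    (hbξ : ∀ ξ : A ⊗[𝕜] E, dirDeriv ξ (dirDeriv b f) p = 0) (ξ η : A ⊗[𝕜] E) :
    dirDeriv η (dirDeriv v f) p * dirDeriv ξ (dirDeriv w f) p +
        dirDeriv ξ (dirDeriv v f) p * dirDeriv η (dirDeriv w f) p +
      dirDeriv z f p * dirDeriv ξ (dirDeriv η (dirDeriv b f)) p = 0 := by
  have hd := fun ζ : A ⊗[𝕜] E ↦ contDiffAt_dirDeriv (n := 2) ζ hf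
  simpa [dirDeriv_dirDeriv_mul ξ η (hd _) (hd _), hv, hw, hb, hbξ] using
    dirDeriv_dirDeriv_add_eq_zero (f := dirDeriv v f * dirDeriv w f)
      (g := dirDeriv z f * dirDeriv b f) ξ η ((hd v).mul (hd w)) ((hd z).mul (hd b)) hconf

theorem dirDeriv_dirDeriv_mul_eq_zero_of_conformal_of_harmonic [IsRCLikeNormedField 𝕜]
    [NoZeroDivisors A] (hf : ContDiffAt 𝕜 3 f p)
    (hconf : dirDeriv v f * dirDeriv w f + dirDeriv z f * dirDeriv b f =ᶠ[𝓝 p] 0)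
    (hharm : dirDeriv v (dirDeriv w f) + dirDeriv z (dirDeriv b f) =ᶠ[𝓝 p] 0)
    (hv : dirDeriv v f p = 0) (hw : dirDeriv w f p = 0) (hb : dirDeriv b f p = 0)
    (hz : dirDeriv z f p ≠ 0) :
    dirDeriv v (dirDeriv v f) p * dirDeriv w (dirDeriv w f) p = 0 := by
  have hf₂ : ContDiffAt 𝕜 2 f p := hf.of_le (by norm_num)
  have hd := fun ζ : A ⊗[𝕜] E ↦ contDiffAt_dirDeriv (n := 2) ζ hf
  have hbξ := dirDeriv_dirDeriv_eq_zero_of_conformal hf₂ hconf hv hw hb hz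
  have hbv : dirDeriv b (dirDeriv v f) p = 0 := by rw [dirDeriv_comm b v hf₂, hbξ]
  have hbw : dirDeriv b (dirDeriv w f) p = 0 := by rw [dirDeriv_comm b w hf₂, hbξ]
  have hvw : dirDeriv v (dirDeriv w f) p = 0 := by simpa [hbξ] using hharm.self_of_nhds
  have hconf_vw : dirDeriv v (dirDeriv v f) p * dirDeriv w (dirDeriv w f) p +
      dirDeriv z f p * dirDeriv v (dirDeriv w (dirDeriv b f)) p = 0 := by
    simpa [hvw] using dirDeriv_mul_add_mul_dirDeriv_eq_zero_of_conformal hf hconf hv hw hb hbξ v w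
  have hconf_bz : dirDeriv z f p * dirDeriv b (dirDeriv z (dirDeriv b f)) p = 0 := by
    simpa [hbv, hbw] using
      dirDeriv_mul_add_mul_dirDeriv_eq_zero_of_conformal hf hconf hv hw hb hbξ b z
  have hcomm : dirDeriv b (dirDeriv v (dirDeriv w f)) p =
      dirDeriv v (dirDeriv w (dirDeriv b f)) p := by
    rw [dirDeriv_comm b v (hd w)]
    refine dirDeriv_congr v ?_
    filter_upwards [hf₂.eventually (by simp)] with y hy using dirDeriv_comm b w hy
  have hharm_b : dirDeriv v (dirDeriv w (dirDeriv b f)) p +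
      dirDeriv b (dirDeriv z (dirDeriv b f)) p = 0 := by
    rw [← hcomm]
    exact dirDeriv_add_eq_zero b (differentiableAt_dirDeriv v (hd w))
      (differentiableAt_dirDeriv z (hd b)) hharm
  linear_combination hconf_vw - dirDeriv z f p * hharm_b + hconf_bz

end NullFrame

section Minkowski

/-- The coordinate vector field `∂ᵢ` of `ℝ⁴`, as a complex vector field. -/
def coordField (i : Fin 4) : ℂ ⊗[ℝ] (Fin 4 → ℝ) := 1 ⊗ₜ Pi.single i 1

variable {f : (Fin 4 → ℝ) → ℂ} {x : Fin 4 → ℝ}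

lemma pd_eq_dirDeriv (i : Fin 4) : pd i = dirDeriv (coordField i) := by
  ext f x
  simp [pd, coordField, dirDeriv_tmul]

lemma Dv_eq_dirDeriv : Dv = dirDeriv ((1 / 2 : ℂ) • (coordField 1 + coordField 0)) := by
  ext f x
  simp only [Dv, pd_eq_dirDeriv, dirDeriv_smul_left, dirDeriv_add_left, Pi.smul_apply,
    Pi.add_apply, smul_eq_mul]
  ring

lemma Dw_eq_dirDeriv : Dw = dirDeriv ((1 / 2 : ℂ) • (coordField 1 - coordField 0)) := by
  ext f x
  simp only [Dw, pd_eq_dirDeriv, dirDeriv_smul_left, dirDeriv_sub_left, Pi.smul_apply,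
    Pi.sub_apply, smul_eq_mul]
  ring

lemma Dz_eq_dirDeriv :
    Dz = dirDeriv ((1 / 2 : ℂ) • (coordField 2 - Complex.I • coordField 3)) := by
  ext f x
  simp only [Dz, pd_eq_dirDeriv, dirDeriv_smul_left, dirDeriv_sub_left, Pi.smul_apply,
    Pi.sub_apply, smul_eq_mul]
  ring

lemma Dzb_eq_dirDeriv :
    Dzb = dirDeriv ((1 / 2 : ℂ) • (coordField 2 + Complex.I • coordField 3)) := by
  ext f x
  simp only [Dzb, pd_eq_dirDeriv, dirDeriv_smul_left, dirDeriv_add_left, Pi.smul_apply,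
    Pi.add_apply, smul_eq_mul]
  ring

lemma Dv_mul_Dw_add_Dz_mul_Dzb (f : (Fin 4 → ℝ) → ℂ) (x : Fin 4 → ℝ) :
    Dv f x * Dw f x + Dz f x * Dzb f x =
      (-(pd 0 f x ^ 2) + pd 1 f x ^ 2 + pd 2 f x ^ 2 + pd 3 f x ^ 2) / 4 := by
  simp only [Dv, Dw, Dz, Dzb]
  linear_combination (-pd 3 f x ^ 2 / 4) * Complex.I_sq

lemma Dv_Dw_add_Dz_Dzb (hf : ContDiffAt ℝ 2 f x) :
    Dv (Dw f) x + Dz (Dzb f) x =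
      (-pd 0 (pd 0 f) x + pd 1 (pd 1 f) x + pd 2 (pd 2 f) x + pd 3 (pd 3 f) x) / 4 := by
  have hvw : Dv (Dw f) x = (pd 1 (pd 1 f) x - pd 0 (pd 0 f) x) / 4 := by
    rw [Dv_eq_dirDeriv, Dw_eq_dirDeriv, dirDeriv_smul_dirDeriv_smul _ _ _ _ hf,
      dirDeriv_add_dirDeriv_sub _ _ hf, pd_eq_dirDeriv, pd_eq_dirDeriv]
    ring
  have hzzb : Dz (Dzb f) x = (pd 2 (pd 2 f) x + pd 3 (pd 3 f) x) / 4 := by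
    rw [Dz_eq_dirDeriv, Dzb_eq_dirDeriv, dirDeriv_comm _ _ hf,
      dirDeriv_smul_dirDeriv_smul _ _ _ _ hf, dirDeriv_add_dirDeriv_sub _ _ hf,
      dirDeriv_smul_dirDeriv_smul _ _ _ _ hf, Complex.I_mul_I, pd_eq_dirDeriv, pd_eq_dirDeriv]
    ring
  rw [hvw, hzzb]
  ring

theorem minkowski_harmonic_morphism_pointwise_computations_general
    {φ : (Fin 4 → ℝ) → ℂ} {p : Fin 4 → ℝ} (hφ : ContDiffAt ℝ 3 φ p)
    (hconf : ∀ᶠ x in 𝓝 p,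
      -((pd 0 φ x) ^ 2) + (pd 1 φ x) ^ 2 + (pd 2 φ x) ^ 2 + (pd 3 φ x) ^ 2 = 0)
    (hlap : ∀ᶠ x in 𝓝 p,
      -(pd 0 (pd 0 φ) x) + pd 1 (pd 1 φ) x + pd 2 (pd 2 φ) x + pd 3 (pd 3 φ) x = 0)
    (hv : Dv φ p = 0) (hw : Dw φ p = 0) (hzb : Dzb φ p = 0) (hz : Dz φ p ≠ 0) :
    (Dv (Dzb φ) p = 0 ∧ Dw (Dzb φ) p = 0 ∧ Dz (Dzb φ) p = 0 ∧ Dzb (Dzb φ) p = 0) ∧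
    (Dv (Dv φ) p) * (Dw (Dw φ) p) = 0 := by
  have hφ₂ : ContDiffAt ℝ 2 φ p := hφ.of_le (by norm_num)
  have hconf' : Dv φ * Dw φ + Dz φ * Dzb φ =ᶠ[𝓝 p] 0 := by
    filter_upwards [hconf] with x hx
    simp [Dv_mul_Dw_add_Dz_mul_Dzb, hx]
  have hharm : Dv (Dw φ) + Dz (Dzb φ) =ᶠ[𝓝 p] 0 := by
    filter_upwards [hlap, hφ₂.eventually (by simp)] with x hx hφx
    simp [Dv_Dw_add_Dz_Dzb hφx, hx]
  rw [Dv_eq_dirDeriv, Dw_eq_dirDeriv, Dz_eq_dirDeriv, Dzb_eq_dirDeriv] at *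
  have hzbξ := dirDeriv_dirDeriv_eq_zero_of_conformal hφ₂ hconf' hv hw hzb hz
  exact ⟨⟨hzbξ _, hzbξ _, hzbξ _, hzbξ _⟩,
    dirDeriv_dirDeriv_mul_eq_zero_of_conformal_of_harmonic hφ hconf' hharm hv hw hzb hz⟩

end Minkowski

/-- The computations at the heart of Theorem 8.6: for a smooth harmonic morphism `φ` on an
open subset of Minkowski `ℝ⁴` and a point `p` where `φ_v = φ_w = φ_{z̄} = 0` and `φ_z ≠ 0`,
all first derivatives of `φ_{z̄}` vanish at `p`, and `φ_{vv}(p)·φ_{ww}(p) = 0`. -/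
theorem minkowski_harmonic_morphism_pointwise_computations
    (U : Set (Fin 4 → ℝ)) (hU : IsOpen U)
    (φ : (Fin 4 → ℝ) → ℂ) (hφ : ContDiffOn ℝ (⊤ : ℕ∞) φ U)
    (hconf : ∀ x ∈ U,
      -((pd 0 φ x) ^ 2) + (pd 1 φ x) ^ 2 + (pd 2 φ x) ^ 2 + (pd 3 φ x) ^ 2 = 0)
    (hlap : ∀ x ∈ U,
      -(pd 0 (pd 0 φ) x) + pd 1 (pd 1 φ) x + pd 2 (pd 2 φ) x + pd 3 (pd 3 φ) x = 0)
    (p : Fin 4 → ℝ) (hp : p ∈ U)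
    (hv : Dv φ p = 0) (hw : Dw φ p = 0) (hzb : Dzb φ p = 0) (hz : Dz φ p ≠ 0) :
    (Dv (Dzb φ) p = 0 ∧ Dw (Dzb φ) p = 0 ∧ Dz (Dzb φ) p = 0 ∧ Dzb (Dzb φ) p = 0) ∧
    (Dv (Dv φ) p) * (Dw (Dw φ) p) = 0 := by
  have hUp : U ∈ 𝓝 p := hU.mem_nhds hp
  exact minkowski_harmonic_morphism_pointwise_computations_general
    ((hφ.contDiffAt hUp).of_le (by norm_cast))
    (eventually_of_mem hUp hconf) (eventually_of_mem hUp hlap) hv hw hzb hz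

end
end

section
/- Let η denote the Minkowski bilinear form on ℝ⁴: η(u,v) = −u₀v₀ + u₁v₁ + u₂v₂ + u₃v₃, and let e₀, e₁, e₂, e₃ be the standard basis. Let ℓ : ℝ⁴ → ℂ be an ℝ-linear map whose rank as a real-linear map is 1, and which satisfies −ℓ(e₀)² + ℓ(e₁)² + ℓ(e₂)² + ℓ(e₃)² = 0. Then there is exactly one 1-dimensional subspace W of ℝ⁴ such that W ⊆ ker ℓ and η(w,w) = 0 for all w ∈ W; moreover ker ℓ = W^⊥ = {v ∈ ℝ⁴ : η(v,w) = 0 for all w ∈ W}. -/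
noncomputable section

/-- The Minkowski bilinear form on `ℝ⁴`. -/
def eta (u v : Fin 4 → ℝ) : ℝ := -(u 0 * v 0) + u 1 * v 1 + u 2 * v 2 + u 3 * v 3

/-!
A linear map `ℓ` of rank one factors as `v ↦ f v • c` for a nonzero functional `f`, and
nondegeneracy turns `f` into `B · n` for a vector `n ≠ 0`, so `ker ℓ = n^⊥`. The conformality
condition evaluates to `B n n • c ^ 2 = 0`: the normal `n` is null and spans a null line inside its
own orthogonal complement. In Lorentzian signature two orthogonal null vectors are proportional,
because subtracting from one the multiple of the other that makes it orthogonal to the time axis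
leaves a null vector in a definite subspace. Hence no other null line lies in `n^⊥`.
-/

section RankOne

open Module

variable {K V A : Type*} [Field K] [AddCommGroup V] [Module K V] [AddCommGroup A] [Module K A]

theorem exists_eq_smulRight_of_finrank_range_eq_one {ℓ : V →ₗ[K] A}
    (hrank : finrank K (LinearMap.range ℓ) = 1) :
    ∃ f : Dual K V, f ≠ 0 ∧ ∃ c : A, c ≠ 0 ∧ ℓ = f.smulRight c := by
  obtain ⟨⟨c, hc_mem⟩, hc, hspan⟩ := finrank_eq_one_iff'.mp hrank
  replace hc : c ≠ 0 := fun h => hc (Subtype.ext h)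
  obtain ⟨f, rfl⟩ : ∃ f : Dual K V, ℓ = f.smulRight c := by
    let e := LinearEquiv.toSpanNonzeroSingleton K A c hc
    have hmem (v : V) : ℓ v ∈ Submodule.span K {c} := by
      obtain ⟨r, hr⟩ := hspan ⟨ℓ v, LinearMap.mem_range_self ℓ v⟩
      exact Submodule.mem_span_singleton.mpr ⟨r, congrArg Subtype.val hr⟩
    refine ⟨e.symm ∘ₗ ℓ.codRestrict _ hmem, LinearMap.ext fun v => ?_⟩
    exact (congrArg Subtype.val (e.apply_symm_apply ⟨ℓ v, hmem v⟩)).symm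
  refine ⟨f, ?_, c, hc, rfl⟩
  rintro rfl
  obtain ⟨v, hv⟩ := hc_mem
  exact hc (hv.symm.trans (zero_smul K c))

end RankOne

section NullVectors

open Module

variable {K V : Type*} [Field K] [AddCommGroup V] [Module K V] {B : LinearMap.BilinForm K V}

theorem forall_mem_span_singleton_bilin_eq_zero_iff {v n : V} :
    (∀ w ∈ Submodule.span K {n}, B v w = 0) ↔ B v n = 0 :=
  Submodule.span_singleton_le_iff_mem n (LinearMap.ker (B v))

theorem bilin_self_eq_zero_of_mem_span_singleton {n w : V} (hn : B n n = 0)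
    (hw : w ∈ Submodule.span K {n}) : B w w = 0 := by
  obtain ⟨r, rfl⟩ := Submodule.mem_span_singleton.mp hw
  simp [hn]

variable {t n : V}

theorem mem_span_singleton_of_null_of_orthogonal (hB : B.IsRefl)
    (ht : ∀ x, B t x = 0 → B x x = 0 → x = 0) (hn₀ : n ≠ 0) (hn : B n n = 0)
    {w : V} (hw : B w w = 0) (hwn : B w n = 0) : w ∈ Submodule.span K {n} := by
  have htn : B t n ≠ 0 := fun h => hn₀ (ht n h hn)
  set r := B t w / B t n with hr
  have horth : B t (w - r • n) = 0 := by simp [hr, div_mul_cancel₀ _ htn]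
  have hnull : B (w - r • n) (w - r • n) = 0 := by simp [hn, hw, hwn, hB w n hwn]
  exact Submodule.mem_span_singleton.mpr ⟨r, (sub_eq_zero.mp (ht _ horth hnull)).symm⟩

theorem eq_span_singleton_of_null_of_orthogonal (hB : B.IsRefl)
    (ht : ∀ x, B t x = 0 → B x x = 0 → x = 0) (hn₀ : n ≠ 0) (hn : B n n = 0)
    {W : Submodule K V} (hrank : finrank K W = 1) (hnull : ∀ w ∈ W, B w w = 0)
    (horth : ∀ w ∈ W, B w n = 0) : W = Submodule.span K {n} :=
  Submodule.eq_of_le_of_finrank_eq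
    (fun w hw => mem_span_singleton_of_null_of_orthogonal hB ht hn₀ hn (hnull w hw) (horth w hw))
    (hrank.trans (finrank_span_singleton hn₀).symm)

end NullVectors

section DualFamilies

open Module

variable {K V A ι : Type*} [Field K] [AddCommGroup V] [Module K V] [Ring A] [Algebra K A]
  [Fintype ι] [DecidableEq ι] {B : LinearMap.BilinForm K V} {b : Basis ι K V} {b' : ι → V}

theorem bilin_sum_smul_dual_eq_apply (hdual : ∀ i j, B (b i) (b' j) = if i = j then 1 else 0)
    (f : Dual K V) (v : V) : B v (∑ i, f (b i) • b' i) = f v := by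
  suffices B.flip (∑ i, f (b i) • b' i) = f from LinearMap.congr_fun this v
  exact b.ext fun j => by simp [hdual]

theorem exists_null_normal_of_finrank_range_eq_one [IsReduced A]
    (hdual : ∀ i j, B (b i) (b' j) = if i = j then 1 else 0) {ℓ : V →ₗ[K] A}
    (hrank : finrank K (LinearMap.range ℓ) = 1) (hconf : ∑ i, ℓ (b i) * ℓ (b' i) = 0) :
    ∃ n ≠ 0, B n n = 0 ∧ ∀ v, v ∈ LinearMap.ker ℓ ↔ B v n = 0 := by
  obtain ⟨f, hf, c, hc, rfl⟩ := exists_eq_smulRight_of_finrank_range_eq_one hrank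
  set n := ∑ i, f (b i) • b' i with hn
  have hfn (v : V) : B v n = f v := bilin_sum_smul_dual_eq_apply hdual f v
  refine ⟨n, ?_, ?_, fun v => ?_⟩
  · intro hn₀
    exact hf (LinearMap.ext fun v => by simpa [hn₀] using (hfn v).symm)
  · have hsq : B n n • c ^ 2 = 0 := calc
      B n n • c ^ 2 = (∑ i, f (b i) * f (b' i)) • c ^ 2 := by
        rw [hfn n, hn]
        simp only [map_sum, map_smul, smul_eq_mul]
      _ = ∑ i, (f (b i) • c) * (f (b' i) • c) := by
        simp only [Finset.sum_smul, smul_mul_smul_comm, sq]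
      _ = 0 := hconf
    exact (smul_eq_zero.mp hsq).resolve_right (pow_ne_zero 2 hc)
  · simp [hfn, hc]

/-- The vector `t` stands for the time axis, and `ht`, anisotropy of `B` on `t^⊥`, for Lorentzian
signature. The sum in `hconf` is the trace of `ℓ ⊗ ℓ` with respect to `B`. -/
theorem degenerate_point_unique_null_direction_general [IsReduced A] (hB : B.IsRefl) {t : V}
    (ht : ∀ x, B t x = 0 → B x x = 0 → x = 0)
    (hdual : ∀ i j, B (b i) (b' j) = if i = j then 1 else 0) {ℓ : V →ₗ[K] A}
    (hrank : finrank K (LinearMap.range ℓ) = 1) (hconf : ∑ i, ℓ (b i) * ℓ (b' i) = 0) :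
    ∃ W : Submodule K V,
      (finrank K W = 1 ∧ W ≤ LinearMap.ker ℓ ∧ ∀ w ∈ W, B w w = 0) ∧
      (∀ W' : Submodule K V,
        (finrank K W' = 1 ∧ W' ≤ LinearMap.ker ℓ ∧ ∀ w ∈ W', B w w = 0) → W' = W) ∧
      (∀ v, v ∈ LinearMap.ker ℓ ↔ ∀ w ∈ W, B v w = 0) := by
  obtain ⟨n, hn₀, hn, hker⟩ := exists_null_normal_of_finrank_range_eq_one hdual hrank hconf
  refine ⟨Submodule.span K {n}, ⟨finrank_span_singleton hn₀, ?_, ?_⟩, ?_, fun v => ?_⟩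
  · exact (Submodule.span_singleton_le_iff_mem _ _).mpr ((hker n).mpr hn)
  · exact fun w hw => bilin_self_eq_zero_of_mem_span_singleton hn hw
  · rintro W' ⟨hrank', hle, hnull⟩
    exact eq_span_singleton_of_null_of_orthogonal hB ht hn₀ hn hrank' hnull
      fun w hw => (hker w).mp (hle hw)
  · rw [hker, forall_mem_span_singleton_bilin_eq_zero_iff]

end DualFamilies

section Minkowski

/-- The Minkowski form `eta` as a bundled bilinear form, to which the theory of bilinear forms
applies; the two agree by definition. -/
def etaForm : LinearMap.BilinForm ℝ (Fin 4 → ℝ) :=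
  LinearMap.mk₂ ℝ eta
    (fun _ _ _ => by simp only [eta, Pi.add_apply]; ring)
    (fun _ _ _ => by simp only [eta, Pi.smul_apply, smul_eq_mul]; ring)
    (fun _ _ _ => by simp only [eta, Pi.add_apply]; ring)
    (fun _ _ _ => by simp only [eta, Pi.smul_apply, smul_eq_mul]; ring)

theorem etaForm_apply (u v : Fin 4 → ℝ) : etaForm u v = eta u v := rfl

/-- The family `-e₀, e₁, e₂, e₃`, which is `eta`-dual to the standard basis. -/
def etaDual : Fin 4 → Fin 4 → ℝ :=
  ![-Pi.single 0 1, Pi.single 1 1, Pi.single 2 1, Pi.single 3 1]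

theorem etaForm_isRefl : etaForm.IsRefl := fun u v h => by
  simp only [etaForm_apply, eta] at h ⊢
  linear_combination h

theorem eq_zero_of_etaForm_single_zero_of_etaForm_self (x : Fin 4 → ℝ)
    (horth : etaForm (Pi.single 0 1) x = 0) (hnull : etaForm x x = 0) : x = 0 := by
  have hx₀ : x 0 = 0 := by simpa [etaForm_apply, eta] using horth
  have hsum : ∑ i : Fin 3, x i.succ * x i.succ = 0 := by
    simpa [etaForm_apply, eta, hx₀, Fin.sum_univ_three] using hnull
  have hx := (Finset.sum_mul_self_eq_zero_iff _ _).mp hsum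
  exact funext (Fin.cases hx₀ fun i => hx i (Finset.mem_univ i))

theorem etaForm_basisFun_etaDual (i j : Fin 4) :
    etaForm (Pi.basisFun ℝ (Fin 4) i) (etaDual j) = if i = j then 1 else 0 := by
  fin_cases i <;> fin_cases j <;> simp [etaForm_apply, eta, etaDual]

theorem sum_apply_basisFun_mul_apply_etaDual {A : Type*} [Ring A] [Module ℝ A]
    (ℓ : (Fin 4 → ℝ) →ₗ[ℝ] A) :
    ∑ i, ℓ (Pi.basisFun ℝ (Fin 4) i) * ℓ (etaDual i) =
      -(ℓ (Pi.single 0 1)) ^ 2 + (ℓ (Pi.single 1 1)) ^ 2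
        + (ℓ (Pi.single 2 1)) ^ 2 + (ℓ (Pi.single 3 1)) ^ 2 := by
  simp [Fin.sum_univ_four, etaDual, sq]

end Minkowski

/-- Corollary 8.4 (linear-algebra form): if an `ℝ`-linear map `ℓ : ℝ⁴ → ℂ` has real rank `1`
and satisfies `−ℓ(e₀)² + ℓ(e₁)² + ℓ(e₂)² + ℓ(e₃)² = 0`, then there is a unique null line
`W ⊆ ker ℓ`, and moreover `ker ℓ = W^⊥` for the Minkowski form. -/
theorem degenerate_point_unique_null_direction
    (ℓ : (Fin 4 → ℝ) →ₗ[ℝ] ℂ)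
    (hrank : Module.finrank ℝ (LinearMap.range ℓ) = 1)
    (hconf : -(ℓ (Pi.single 0 1)) ^ 2 + (ℓ (Pi.single 1 1)) ^ 2
        + (ℓ (Pi.single 2 1)) ^ 2 + (ℓ (Pi.single 3 1)) ^ 2 = 0) :
    ∃ W : Submodule ℝ (Fin 4 → ℝ),
      (Module.finrank ℝ W = 1 ∧ W ≤ LinearMap.ker ℓ ∧ ∀ w ∈ W, eta w w = 0) ∧
      (∀ W' : Submodule ℝ (Fin 4 → ℝ),
        (Module.finrank ℝ W' = 1 ∧ W' ≤ LinearMap.ker ℓ ∧ ∀ w ∈ W', eta w w = 0) →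
        W' = W) ∧
      (∀ v, v ∈ LinearMap.ker ℓ ↔ ∀ w ∈ W, eta v w = 0) := by
  exact degenerate_point_unique_null_direction_general etaForm_isRefl
    eq_zero_of_etaForm_single_zero_of_etaForm_self etaForm_basisFun_etaDual hrank
    ((sum_apply_basisFun_mul_apply_etaDual ℓ).trans hconf)

end
end

section
/- Let ψ : W → ℂ be a holomorphic function on an open subset W of ℂ³ (variables (w₁,w₂,w₃)), let A be an open subset of ℝ⁴ (coordinates (x₀,x₁,x₂,x₃)), and write q₁ = x₀ + ix₁, q̄₁ = x₀ − ix₁, q₂ = x₂ + ix₃, q̄₂ = x₂ − ix₃. Let μ : A → ℂ be a C¹ map such that for all x ∈ A: ψ(μ(x), q₁(x) − μ(x)q̄₂(x), q₂(x) + μ(x)q̄₁(x)) = 0, and the nondegeneracy condition (∂ψ/∂w₁ − q̄₂(x)·∂ψ/∂w₂ + q̄₁(x)·∂ψ/∂w₃), evaluated at (μ(x), q₁(x) − μ(x)q̄₂(x), q₂(x) + μ(x)q̄₁(x)), is nonzero. Then μ satisfies on A the equations ∂_{q̄₁}μ − μ·∂_{q₂}μ = 0 and ∂_{q̄₂}μ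 + μ·∂_{q₁}μ = 0, where ∂_{q₁} = ½(∂₀ − i∂₁), ∂_{q̄₁} = ½(∂₀ + i∂₁), ∂_{q₂} = ½(∂₂ − i∂₃), ∂_{q̄₂} = ½(∂₂ + i∂₃). -/
noncomputable section

/-- Complex partial derivative in the `i`-th coordinate direction of a map `ℂ³ → ℂ`. -/
def pdC3 (i : Fin 3) (ψ : (Fin 3 → ℂ) → ℂ) (z : Fin 3 → ℂ) : ℂ :=
  fderiv ℂ ψ z (Pi.single i 1)

/-- `q₁ = x₀ + i x₁`. -/
def q1 (x : Fin 4 → ℝ) : ℂ := (x 0 : ℂ) + Complex.I * (x 1 : ℂ)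
/-- `q̄₁ = x₀ − i x₁`. -/
def q1b (x : Fin 4 → ℝ) : ℂ := (x 0 : ℂ) - Complex.I * (x 1 : ℂ)
/-- `q₂ = x₂ + i x₃`. -/
def q2 (x : Fin 4 → ℝ) : ℂ := (x 2 : ℂ) + Complex.I * (x 3 : ℂ)
/-- `q̄₂ = x₂ − i x₃`. -/
def q2b (x : Fin 4 → ℝ) : ℂ := (x 2 : ℂ) - Complex.I * (x 3 : ℂ)

/-- The point `(μ(x), q₁ − μ q̄₂, q₂ + μ q̄₁) ∈ ℂ³` of the incidence relations. -/
def twistorPt (μ : (Fin 4 → ℝ) → ℂ) (x : Fin 4 → ℝ) : Fin 3 → ℂ :=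
  ![μ x, q1 x - μ x * q2b x, q2 x + μ x * q1b x]

/-! With `m` constant, the complex vector fields `∂_{q̄₁} − m ∂_{q₂}` and `∂_{q̄₂} + m ∂_{q₁}`
annihilate both `q₁ − m q̄₂` and `q₂ + m q̄₁`. Applying either of them with `m = μ(x)` to the
incidence relation at `x`, only the derivative of `μ` survives, multiplied by the nondegeneracy
factor. -/

section ComplexLineDeriv

open scoped Topology

variable {ι F G : Type*} [Fintype ι] [DecidableEq ι]
  [NormedAddCommGroup F] [NormedSpace ℂ F] [NormedAddCommGroup G] [NormedSpace ℂ G]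
  {𝔸 : Type*} [NormedRing 𝔸] [NormedAlgebra ℂ 𝔸] {x : ι → ℝ} {c : ι → ℂ}

/-- The derivative of `f` at `x` along the complexified tangent vector `∑ i, c i ∂ᵢ`: the
`ℂ`-linear extension in `c` of the real directional derivative. -/
def complexLineDeriv (f : (ι → ℝ) → F) (x : ι → ℝ) (c : ι → ℂ) : F :=
  ∑ i, c i • fderiv ℝ f x (Pi.single i 1)

theorem complexLineDeriv_comp {ψ : F → G} {f : (ι → ℝ) → F}
    (hψ : DifferentiableAt ℂ ψ (f x)) (hf : DifferentiableAt ℝ f x) :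
    complexLineDeriv (fun y ↦ ψ (f y)) x c = fderiv ℂ ψ (f x) (complexLineDeriv f x c) := by
  have hcomp : fderiv ℝ (fun y ↦ ψ (f y)) x
      = ((fderiv ℂ ψ (f x)).restrictScalars ℝ).comp (fderiv ℝ f x) :=
    ((hψ.hasFDerivAt.restrictScalars ℝ).comp x hf.hasFDerivAt).fderiv
  simp [complexLineDeriv, hcomp]

theorem complexLineDeriv_eq_zero_of_eventually_eq_zero {f : (ι → ℝ) → F}
    (hf : ∀ᶠ y in 𝓝 x, f y = 0) : complexLineDeriv f x c = 0 := by
  have hfderiv : fderiv ℝ f x = 0 := by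
    simpa using Filter.EventuallyEq.fderiv_eq (𝕜 := ℝ) (f := fun _ ↦ (0 : F)) hf
  simp [complexLineDeriv, hfderiv]

theorem complexLineDeriv_pi_apply {κ : Type*} [Fintype κ] {f : (ι → ℝ) → κ → F}
    (hf : DifferentiableAt ℝ f x) (k : κ) :
    complexLineDeriv f x c k = complexLineDeriv (fun y ↦ f y k) x c := by
  simp [complexLineDeriv, fderiv_apply hf]

theorem complexLineDeriv_ofReal_apply (i : ι) :
    complexLineDeriv (fun y : ι → ℝ ↦ (y i : ℂ)) x c = c i := by
  let coord : (ι → ℝ) →L[ℝ] ℂ := Complex.ofRealCLM.comp (ContinuousLinearMap.proj i)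
  have hcoord : fderiv ℝ (fun y : ι → ℝ ↦ (y i : ℂ)) x = coord := coord.fderiv
  simp [complexLineDeriv, hcoord, coord, Pi.single_apply, apply_ite Complex.ofReal]

theorem complexLineDeriv_add {f g : (ι → ℝ) → F}
    (hf : DifferentiableAt ℝ f x) (hg : DifferentiableAt ℝ g x) :
    complexLineDeriv (fun y ↦ f y + g y) x c
      = complexLineDeriv f x c + complexLineDeriv g x c := by
  simp [complexLineDeriv, fderiv_fun_add hf hg, Finset.sum_add_distrib]

theorem complexLineDeriv_sub {f g : (ι → ℝ) → F}
    (hf : DifferentiableAt ℝ f x) (hg : DifferentiableAt ℝ g x) :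
    complexLineDeriv (fun y ↦ f y - g y) x c
      = complexLineDeriv f x c - complexLineDeriv g x c := by
  simp [complexLineDeriv, fderiv_fun_sub hf hg, smul_sub]

theorem complexLineDeriv_mul {f g : (ι → ℝ) → 𝔸}
    (hf : DifferentiableAt ℝ f x) (hg : DifferentiableAt ℝ g x) :
    complexLineDeriv (fun y ↦ f y * g y) x c
      = f x * complexLineDeriv g x c + complexLineDeriv f x c * g x := by
  simp [complexLineDeriv, fderiv_fun_mul' hf hg, Finset.mul_sum, Finset.sum_mul,
    Finset.sum_add_distrib]

theorem complexLineDeriv_const_mul {f : (ι → ℝ) → 𝔸} (hf : DifferentiableAt ℝ f x) (a : 𝔸) :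
    complexLineDeriv (fun y ↦ a * f y) x c = a * complexLineDeriv f x c := by
  simp [complexLineDeriv, fderiv_const_mul hf, Finset.mul_sum]

end ComplexLineDeriv

section TwistorLift

open scoped Topology

variable {μ : (Fin 4 → ℝ) → ℂ} {x : Fin 4 → ℝ} {c : Fin 4 → ℂ}

@[fun_prop]
theorem differentiable_q1 : Differentiable ℝ q1 := by unfold q1; fun_prop

@[fun_prop]
theorem differentiable_q1b : Differentiable ℝ q1b := by unfold q1b; fun_prop

@[fun_prop]
theorem differentiable_q2 : Differentiable ℝ q2 := by unfold q2; fun_prop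

@[fun_prop]
theorem differentiable_q2b : Differentiable ℝ q2b := by unfold q2b; fun_prop

theorem complexLineDeriv_q1 : complexLineDeriv q1 x c = c 0 + Complex.I * c 1 := by
  unfold q1
  rw [complexLineDeriv_add (by fun_prop) (by fun_prop), complexLineDeriv_const_mul (by fun_prop),
    complexLineDeriv_ofReal_apply, complexLineDeriv_ofReal_apply]

theorem complexLineDeriv_q1b : complexLineDeriv q1b x c = c 0 - Complex.I * c 1 := by
  unfold q1b
  rw [complexLineDeriv_sub (by fun_prop) (by fun_prop), complexLineDeriv_const_mul (by fun_prop),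
    complexLineDeriv_ofReal_apply, complexLineDeriv_ofReal_apply]

theorem complexLineDeriv_q2 : complexLineDeriv q2 x c = c 2 + Complex.I * c 3 := by
  unfold q2
  rw [complexLineDeriv_add (by fun_prop) (by fun_prop), complexLineDeriv_const_mul (by fun_prop),
    complexLineDeriv_ofReal_apply, complexLineDeriv_ofReal_apply]

theorem complexLineDeriv_q2b : complexLineDeriv q2b x c = c 2 - Complex.I * c 3 := by
  unfold q2b
  rw [complexLineDeriv_sub (by fun_prop) (by fun_prop), complexLineDeriv_const_mul (by fun_prop),
    complexLineDeriv_ofReal_apply, complexLineDeriv_ofReal_apply]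

theorem complexLineDeriv_eq_sum_pd (f : (Fin 4 → ℝ) → ℂ) :
    complexLineDeriv f x c = c 0 * pd 0 f x + c 1 * pd 1 f x + c 2 * pd 2 f x + c 3 * pd 3 f x := by
  simp only [complexLineDeriv, pd, Fin.sum_univ_four, smul_eq_mul]

theorem fderiv_eq_sum_pdC3 (ψ : (Fin 3 → ℂ) → ℂ) (z w : Fin 3 → ℂ) :
    fderiv ℂ ψ z w = w 0 * pdC3 0 ψ z + w 1 * pdC3 1 ψ z + w 2 * pdC3 2 ψ z := by
  have hsingle (j : Fin 3) : fderiv ℂ ψ z (Pi.single j (w j)) = w j * pdC3 j ψ z := by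
    rw [pdC3, ← smul_eq_mul, ← map_smul, ← Pi.single_smul, smul_eq_mul, mul_one]
  calc
    fderiv ℂ ψ z w = ∑ j, fderiv ℂ ψ z (Pi.single j (w j)) := by
      rw [← map_sum, Finset.univ_sum_single]
    _ = w 0 * pdC3 0 ψ z + w 1 * pdC3 1 ψ z + w 2 * pdC3 2 ψ z := by
      simp only [hsingle, Fin.sum_univ_three]

theorem differentiableAt_twistorPt (hμ : DifferentiableAt ℝ μ x) :
    DifferentiableAt ℝ (twistorPt μ) x := by
  refine differentiableAt_pi.2 fun i ↦ ?_
  fin_cases i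
  · exact hμ
  · exact (by fun_prop : DifferentiableAt ℝ (fun y ↦ q1 y - μ y * q2b y) x)
  · exact (by fun_prop : DifferentiableAt ℝ (fun y ↦ q2 y + μ y * q1b y) x)

/-- The complexified tangent vectors `c` of type `(0,1)` for the Hermitian structure with
parameter `m`, encoded as those annihilated by the differentials of `q₁ − m q̄₂` and `q₂ + m q̄₁`
with `m` held constant. -/
def IsAntiholomorphicVector (m : ℂ) (c : Fin 4 → ℂ) : Prop :=
  c 0 + Complex.I * c 1 - m * (c 2 - Complex.I * c 3) = 0 ∧
    c 2 + Complex.I * c 3 + m * (c 0 - Complex.I * c 1) = 0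

-- The coefficients of `∂_{q̄₁} − m ∂_{q₂}`.
theorem isAntiholomorphicVector_dq1b_sub_mul_dq2 (m : ℂ) :
    IsAntiholomorphicVector m ![1 / 2, Complex.I / 2, -m / 2, m * Complex.I / 2] := by
  constructor <;> simp only [Matrix.cons_val] <;> grind [Complex.I_mul_I]

-- The coefficients of `∂_{q̄₂} + m ∂_{q₁}`.
theorem isAntiholomorphicVector_dq2b_add_mul_dq1 (m : ℂ) :
    IsAntiholomorphicVector m ![m / 2, -(m * Complex.I) / 2, 1 / 2, Complex.I / 2] := by
  constructor <;> simp only [Matrix.cons_val] <;> grind [Complex.I_mul_I]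

theorem IsAntiholomorphicVector.complexLineDeriv_twistorPt
    (hc : IsAntiholomorphicVector (μ x) c) (hμ : DifferentiableAt ℝ μ x) :
    complexLineDeriv (twistorPt μ) x c = complexLineDeriv μ x c • ![1, -q2b x, q1b x] := by
  have hsnd : complexLineDeriv (fun y ↦ q1 y - μ y * q2b y) x c
      = complexLineDeriv μ x c * -q2b x := by
    rw [complexLineDeriv_sub (by fun_prop) (by fun_prop), complexLineDeriv_mul hμ (by fun_prop),
      complexLineDeriv_q1, complexLineDeriv_q2b]
    linear_combination hc.1
  have hthd : complexLineDeriv (fun y ↦ q2 y + μ y * q1b y) x c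
      = complexLineDeriv μ x c * q1b x := by
    rw [complexLineDeriv_add (by fun_prop) (by fun_prop), complexLineDeriv_mul hμ (by fun_prop),
      complexLineDeriv_q2, complexLineDeriv_q1b]
    linear_combination hc.2
  ext i
  rw [complexLineDeriv_pi_apply (differentiableAt_twistorPt hμ)]
  fin_cases i
  · simp [twistorPt]
  · simpa [twistorPt] using hsnd
  · simpa [twistorPt] using hthd

theorem IsAntiholomorphicVector.complexLineDeriv_eq_zero {ψ : (Fin 3 → ℂ) → ℂ}
    (hc : IsAntiholomorphicVector (μ x) c)
    (hψ : DifferentiableAt ℂ ψ (twistorPt μ x)) (hμ : DifferentiableAt ℝ μ x)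
    (hinc : ∀ᶠ y in 𝓝 x, ψ (twistorPt μ y) = 0)
    (hnd : pdC3 0 ψ (twistorPt μ x) - q2b x * pdC3 1 ψ (twistorPt μ x)
      + q1b x * pdC3 2 ψ (twistorPt μ x) ≠ 0) :
    complexLineDeriv μ x c = 0 := by
  have hchain : complexLineDeriv μ x c * fderiv ℂ ψ (twistorPt μ x) ![1, -q2b x, q1b x] = 0 := by
    rw [← smul_eq_mul, ← map_smul, ← hc.complexLineDeriv_twistorPt hμ,
      ← complexLineDeriv_comp hψ (differentiableAt_twistorPt hμ)]
    exact complexLineDeriv_eq_zero_of_eventually_eq_zero hinc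
  refine (mul_eq_zero.1 hchain).resolve_right ?_
  simpa [fderiv_eq_sum_pdC3, ← sub_eq_add_neg] using hnd

theorem kerr_theorem_euclidean_general {ψ : (Fin 3 → ℂ) → ℂ}
    (hψ : DifferentiableAt ℂ ψ (twistorPt μ x)) (hμ : DifferentiableAt ℝ μ x)
    (hinc : ∀ᶠ y in 𝓝 x, ψ (twistorPt μ y) = 0)
    (hnd : pdC3 0 ψ (twistorPt μ x) - q2b x * pdC3 1 ψ (twistorPt μ x)
      + q1b x * pdC3 2 ψ (twistorPt μ x) ≠ 0) :
    (pd 0 μ x + Complex.I * pd 1 μ x) / 2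
        - μ x * ((pd 2 μ x - Complex.I * pd 3 μ x) / 2) = 0 ∧
      (pd 2 μ x + Complex.I * pd 3 μ x) / 2
        + μ x * ((pd 0 μ x - Complex.I * pd 1 μ x) / 2) = 0 := by
  have hfst := (isAntiholomorphicVector_dq1b_sub_mul_dq2 (μ x)).complexLineDeriv_eq_zero
    hψ hμ hinc hnd
  have hsnd := (isAntiholomorphicVector_dq2b_add_mul_dq1 (μ x)).complexLineDeriv_eq_zero
    hψ hμ hinc hnd
  simp only [complexLineDeriv_eq_sum_pd, Matrix.cons_val] at hfst hsnd
  constructor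
  · linear_combination hfst
  · linear_combination hsnd

end TwistorLift

/-- The Euclidean Kerr theorem (Corollary 11.3, case (ii)): if a `C¹` map `μ` on an open
subset of `ℝ⁴` solves the incidence equation `ψ(μ, q₁ − μq̄₂, q₂ + μq̄₁) = 0` of a
holomorphic `ψ`, nondegenerately, then `μ` satisfies the Hermitian structure equations. -/
theorem kerr_theorem_euclidean
    (W : Set (Fin 3 → ℂ)) (hW : IsOpen W)
    (ψ : (Fin 3 → ℂ) → ℂ) (hψ : DifferentiableOn ℂ ψ W)
    (A : Set (Fin 4 → ℝ)) (hA : IsOpen A)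
    (μ : (Fin 4 → ℝ) → ℂ) (hμ : ContDiffOn ℝ 1 μ A)
    (hmem : ∀ x ∈ A, twistorPt μ x ∈ W)
    (hinc : ∀ x ∈ A, ψ (twistorPt μ x) = 0)
    (hnd : ∀ x ∈ A,
      pdC3 0 ψ (twistorPt μ x) - q2b x * pdC3 1 ψ (twistorPt μ x)
        + q1b x * pdC3 2 ψ (twistorPt μ x) ≠ 0) :
    ∀ x ∈ A,
      (pd 0 μ x + Complex.I * pd 1 μ x) / 2
        - μ x * ((pd 2 μ x - Complex.I * pd 3 μ x) / 2) = 0 ∧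
      (pd 2 μ x + Complex.I * pd 3 μ x) / 2
        + μ x * ((pd 0 μ x - Complex.I * pd 1 μ x) / 2) = 0 := by
  intro x hx
  exact kerr_theorem_euclidean_general
    (hψ.differentiableAt (hW.mem_nhds (hmem x hx)))
    ((hμ.contDiffAt (hA.mem_nhds hx)).differentiableAt one_ne_zero)
    (Filter.eventually_of_mem (hA.mem_nhds hx) hinc) (hnd x hx)

end
end

section
/- Let A be an open subset of ℝ⁴ (coordinates (x₀,x₁,x₂,x₃)), φ : A → ℂ differentiable, p ∈ A, and μ ∈ ℂ. Suppose that at p: ∂_{q̄₁}φ − μ·∂_{q₂}φ = 0 and ∂_{q̄₂}φ + μ·∂_{q₁}φ = 0, where ∂_{q₁} = ½(∂₀ − i∂₁), ∂_{q̄₁} = ½(∂₀ + i∂₁), ∂_{q₂} = ½(∂₂ − i∂₃), ∂_{q̄₂} = ½(∂₂ + i∂₃), and also ∂φ/∂x₀(p) = 0. Then (∂₁φ(p))² + (∂₂φ(p))² + (∂₃φ(p))² = 0. -/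
noncomputable section

/-- The Wirtinger derivative `∂f/∂q = ½(∂ᵢ − i∂ⱼ)f` for the complex coordinate
`q = xᵢ + i xⱼ`; the paper's `q₁`, `q₂` are the pairs `(0, 1)`, `(2, 3)`. -/
def wirtingerDeriv (i j : Fin 4) (f : (Fin 4 → ℝ) → ℂ) (x : Fin 4 → ℝ) : ℂ :=
  (pd i f x - Complex.I * pd j f x) / 2

/-- The conjugate Wirtinger derivative `∂f/∂q̄ = ½(∂ᵢ + i∂ⱼ)f` for the complex coordinate
`q = xᵢ + i xⱼ`. -/
def wirtingerDerivBar (i j : Fin 4) (f : (Fin 4 → ℝ) → ℂ) (x : Fin 4 → ℝ) : ℂ :=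
  (pd i f x + Complex.I * pd j f x) / 2

/-- Holomorphicity of `f` at `x` with respect to the positive almost Hermitian structure
represented by `μ`, whose (0,1)-tangent space at `x` is spanned by `∂_{q̄₁} − μ ∂_{q₂}` and
`∂_{q̄₂} + μ ∂_{q₁}`. Differentiability is included because `pd` is a junk value without it. -/
structure IsJHolomorphicAt (μ : ℂ) (f : (Fin 4 → ℝ) → ℂ) (x : Fin 4 → ℝ) : Prop where
  differentiableAt : DifferentiableAt ℝ f x
  wirtingerDerivBar_zero_one : wirtingerDerivBar 0 1 f x = μ * wirtingerDeriv 2 3 f x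
  wirtingerDerivBar_two_three : wirtingerDerivBar 2 3 f x = -(μ * wirtingerDeriv 0 1 f x)

lemma pd_sq_add_pd_sq (i j : Fin 4) (f : (Fin 4 → ℝ) → ℂ) (x : Fin 4 → ℝ) :
    pd i f x ^ 2 + pd j f x ^ 2 = 4 * (wirtingerDeriv i j f x * wirtingerDerivBar i j f x) := by
  unfold wirtingerDeriv wirtingerDerivBar
  linear_combination pd j f x ^ 2 * Complex.I_sq

theorem Jholomorphic_restriction_horizontally_conformal_general
    {μ : ℂ} {φ : (Fin 4 → ℝ) → ℂ} {p : Fin 4 → ℝ} (hφ : IsJHolomorphicAt μ φ p) :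
    ∑ i, pd i φ p ^ 2 = 0 :=
  calc ∑ i, pd i φ p ^ 2
      = (pd 0 φ p ^ 2 + pd 1 φ p ^ 2) + (pd 2 φ p ^ 2 + pd 3 φ p ^ 2) := by
        rw [Fin.sum_univ_four, ← add_assoc]
    _ = 4 * (wirtingerDeriv 0 1 φ p * wirtingerDerivBar 0 1 φ p)
        + 4 * (wirtingerDeriv 2 3 φ p * wirtingerDerivBar 2 3 φ p) := by
        rw [pd_sq_add_pd_sq, pd_sq_add_pd_sq]
    _ = 4 * (wirtingerDeriv 0 1 φ p * (μ * wirtingerDeriv 2 3 φ p))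
        + 4 * (wirtingerDeriv 2 3 φ p * -(μ * wirtingerDeriv 0 1 φ p)) := by
        rw [hφ.wirtingerDerivBar_zero_one, hφ.wirtingerDerivBar_two_three]
    _ = 0 := by ring

/-- The computation behind Proposition 13.1: if at `p` the map `φ` is holomorphic with
respect to the almost Hermitian structure represented by `μ`, i.e.
`∂_{q̄₁}φ − μ ∂_{q₂}φ = 0` and `∂_{q̄₂}φ + μ ∂_{q₁}φ = 0`, and `∂φ/∂x₀(p) = 0`, then
`(∂₁φ(p))² + (∂₂φ(p))² + (∂₃φ(p))² = 0`. -/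
theorem Jholomorphic_restriction_horizontally_conformal
    (A : Set (Fin 4 → ℝ)) (hA : IsOpen A)
    (φ : (Fin 4 → ℝ) → ℂ) (p : Fin 4 → ℝ) (hp : p ∈ A)
    (hdiff : DifferentiableAt ℝ φ p) (μ : ℂ)
    (heq1 : (pd 0 φ p + Complex.I * pd 1 φ p) / 2
        - μ * ((pd 2 φ p - Complex.I * pd 3 φ p) / 2) = 0)
    (heq2 : (pd 2 φ p + Complex.I * pd 3 φ p) / 2
        + μ * ((pd 0 φ p - Complex.I * pd 1 φ p) / 2) = 0)
    (h0 : pd 0 φ p = 0) :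
    (pd 1 φ p) ^ 2 + (pd 2 φ p) ^ 2 + (pd 3 φ p) ^ 2 = 0 := by
  have hφ : IsJHolomorphicAt μ φ p :=
    ⟨hdiff, sub_eq_zero.mp heq1, eq_neg_of_add_eq_zero_left heq2⟩
  simpa [Fin.sum_univ_four, h0] using Jholomorphic_restriction_horizontally_conformal_general hφ

end
end

section
/- Define μ : {(x₀,x₁,x₂,x₃) ∈ ℝ⁴ : (x₀,x₁) ≠ (0,0)} → ℂ by μ(x) = −(x₂ + i·x₃)/(x₀ − i·x₁). Then μ satisfies ∂_{q̄₁}μ − μ·∂_{q₂}μ = 0 and ∂_{q̄₂}μ + μ·∂_{q₁}μ = 0 on its domain, where ∂_{q₁} = ½(∂₀ − i∂₁), ∂_{q̄₁} = ½(∂₀ + i∂₁), ∂_{q₂} = ½(∂₂ − i∂₃), ∂_{q̄₂} = ½(∂₂ + i∂₃); consequently ∑ᵢ₌₀³ ∂²μ/∂xᵢ² = 0 and ∑ᵢ₌₀³ (∂μ/∂xᵢ)² = 0, i.e. μ is a harmonic morphism to ℂ. -/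
noncomputable section

/-- The map `μ = −(x₂ + i x₃)/(x₀ − i x₁)` of Example 6.1 (restricted to `ℝ⁴`). -/
def muH (x : Fin 4 → ℝ) : ℂ :=
  -(((x 2 : ℂ) + Complex.I * (x 3 : ℂ)) / ((x 0 : ℂ) - Complex.I * (x 1 : ℂ)))

open Topology

/-! The Laplacian of `ℝ⁴` is `4 (∂_{q₁} ∂_{q̄₁} + ∂_{q₂} ∂_{q̄₂})`, so substituting
`∂_{q̄₁}μ = μ ∂_{q₂}μ` and `∂_{q̄₂}μ = -μ ∂_{q₁}μ` turns `Δμ` into `4 μ [∂_{q₁}, ∂_{q₂}]μ = 0`.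
Likewise `∑ (∂ᵢμ)² = 4 (∂_{q₁}μ ∂_{q̄₁}μ + ∂_{q₂}μ ∂_{q̄₂}μ)` cancels. For `μ = -q₂ / q̄₁` the two
equations hold because `q̄₁ dμ = -(dq₂ + μ dq̄₁)`. -/

lemma differentiableAt_fderiv {𝕜 E F : Type*} [NontriviallyNormedField 𝕜] [NormedAddCommGroup E]
    [NormedSpace 𝕜 E] [NormedAddCommGroup F] [NormedSpace 𝕜 F] {f : E → F} {x : E}
    (hf : ContDiffAt 𝕜 2 f x) : DifferentiableAt 𝕜 (fderiv 𝕜 f) x :=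
  (hf.fderiv_right_succ (n := 1)).differentiableAt one_ne_zero

lemma fderiv_div_apply {𝕜 E A : Type*} [NontriviallyNormedField 𝕜] [NormedAddCommGroup E]
    [NormedSpace 𝕜 E] [NormedField A] [NormedAlgebra 𝕜 A] {w z : E → A} {x : E}
    (hw : DifferentiableAt 𝕜 w x) (hz : DifferentiableAt 𝕜 z x) (hzx : z x ≠ 0) (v : E) :
    fderiv 𝕜 (fun y ↦ w y / z y) x v =
      (fderiv 𝕜 w x v - w x / z x * fderiv 𝕜 z x v) / z x := by
  have hquot : DifferentiableAt 𝕜 (fun y ↦ w y / z y) x := by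
    simpa only [div_eq_mul_inv] using hw.fun_mul (hz.fun_inv hzx)
  have hmul : (fun y ↦ w y / z y * z y) =ᶠ[𝓝 x] w :=
    (hz.continuousAt.eventually_ne hzx).mono fun _ hy ↦ div_mul_cancel₀ _ hy
  have hprod := DFunLike.congr_fun (hmul.fderiv_eq (𝕜 := 𝕜)) v
  rw [fderiv_fun_mul hquot hz] at hprod
  simp only [add_apply, smul_apply, smul_eq_mul] at hprod
  rw [eq_div_iff hzx, ← hprod]
  ring

section WirtingerOperators

/-- The Wirtinger operator `∂_q = (∂ᵢ - i∂ⱼ) / 2` of the complex coordinate `q = xᵢ + i xⱼ`, so that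
`∂_{q₁}` is `wirtinger 0 1` and `∂_{q₂}` is `wirtinger 2 3`. -/
def wirtinger (i j : Fin 4) (f : (Fin 4 → ℝ) → ℂ) (x : Fin 4 → ℝ) : ℂ :=
  (pd i f x - Complex.I * pd j f x) / 2

/-- The conjugate Wirtinger operator `∂_q̄ = (∂ᵢ + i∂ⱼ) / 2` of the complex coordinate
`q = xᵢ + i xⱼ`. -/
def conjWirtinger (i j : Fin 4) (f : (Fin 4 → ℝ) → ℂ) (x : Fin 4 → ℝ) : ℂ :=
  (pd i f x + Complex.I * pd j f x) / 2

variable {f g : (Fin 4 → ℝ) → ℂ} {x : Fin 4 → ℝ}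

lemma wirtinger_mul_conjWirtinger (f : (Fin 4 → ℝ) → ℂ) (x : Fin 4 → ℝ) (i j : Fin 4) :
    wirtinger i j f x * conjWirtinger i j f x = ((pd i f x) ^ 2 + (pd j f x) ^ 2) / 4 := by
  unfold wirtinger conjWirtinger
  linear_combination (-(pd j f x) ^ 2 / 4) * Complex.I_sq

lemma wirtinger_congr (h : f =ᶠ[𝓝 x] g) (i j : Fin 4) :
    wirtinger i j f x = wirtinger i j g x := by
  simp only [wirtinger, pd, h.fderiv_eq]

lemma wirtinger_neg (f : (Fin 4 → ℝ) → ℂ) (x : Fin 4 → ℝ) (i j : Fin 4) :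
    wirtinger i j (-f) x = -wirtinger i j f x := by
  simp only [wirtinger, pd, fderiv_neg, neg_apply]
  ring

lemma wirtinger_mul (hf : DifferentiableAt ℝ f x) (hg : DifferentiableAt ℝ g x) (i j : Fin 4) :
    wirtinger i j (f * g) x = f x * wirtinger i j g x + g x * wirtinger i j f x := by
  simp only [wirtinger, pd, fderiv_mul hf hg, add_apply, smul_apply, smul_eq_mul]
  ring

lemma differentiableAt_pd (hf : ContDiffAt ℝ 2 f x) (i : Fin 4) : DifferentiableAt ℝ (pd i f) x :=
  (differentiableAt_fderiv hf).clm_apply (differentiableAt_const _)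

lemma pd_pd_eq_fderiv_fderiv (hf : ContDiffAt ℝ 2 f x) (i j : Fin 4) :
    pd i (pd j f) x = fderiv ℝ (fderiv ℝ f) x (Pi.single i 1) (Pi.single j 1) := by
  change fderiv ℝ (fun y ↦ fderiv ℝ f y (Pi.single j 1)) x _ = _
  simp [fderiv_clm_apply (differentiableAt_fderiv hf) (differentiableAt_const _)]

lemma pd_comm (hf : ContDiffAt ℝ 2 f x) (i j : Fin 4) : pd i (pd j f) x = pd j (pd i f) x := by
  rw [pd_pd_eq_fderiv_fderiv hf, pd_pd_eq_fderiv_fderiv hf]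
  exact hf.isSymmSndFDerivAt (by simp) _ _

lemma pd_add_const_mul_div_const (hf : DifferentiableAt ℝ f x) (hg : DifferentiableAt ℝ g x)
    (i : Fin 4) (a b : ℂ) :
    pd i (fun y ↦ (f y + a * g y) / b) x = (pd i f x + a * pd i g x) / b := by
  simp only [pd, div_eq_mul_inv]
  rw [fderiv_mul_const (by fun_prop), fderiv_fun_add hf (by fun_prop), fderiv_const_mul hg]
  simp only [add_apply, smul_apply, smul_eq_mul]
  ring

lemma pd_wirtinger (hf : ContDiffAt ℝ 2 f x) (i j k : Fin 4) :
    pd i (wirtinger j k f) x = (pd i (pd j f) x - Complex.I * pd i (pd k f) x) / 2 := by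
  have h := pd_add_const_mul_div_const
    (differentiableAt_pd hf j) (differentiableAt_pd hf k) i (-Complex.I) 2
  simp only [neg_mul, ← sub_eq_add_neg] at h
  exact h

lemma pd_conjWirtinger (hf : ContDiffAt ℝ 2 f x) (i j k : Fin 4) :
    pd i (conjWirtinger j k f) x = (pd i (pd j f) x + Complex.I * pd i (pd k f) x) / 2 :=
  pd_add_const_mul_div_const (differentiableAt_pd hf j) (differentiableAt_pd hf k) i Complex.I 2

lemma differentiableAt_wirtinger (hf : ContDiffAt ℝ 2 f x) (i j : Fin 4) :
    DifferentiableAt ℝ (wirtinger i j f) x :=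
  ((differentiableAt_pd hf i).sub ((differentiableAt_pd hf j).const_mul Complex.I)).mul_const 2⁻¹

lemma wirtinger_comm (hf : ContDiffAt ℝ 2 f x) (i j k l : Fin 4) :
    wirtinger i j (wirtinger k l f) x = wirtinger k l (wirtinger i j f) x := by
  rw [wirtinger, wirtinger]
  simp only [pd_wirtinger hf]
  rw [pd_comm hf k i, pd_comm hf k j, pd_comm hf l i, pd_comm hf l j]
  ring

lemma wirtinger_conjWirtinger (hf : ContDiffAt ℝ 2 f x) (i j : Fin 4) :
    wirtinger i j (conjWirtinger i j f) x = (pd i (pd i f) x + pd j (pd j f) x) / 4 := by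
  rw [wirtinger, pd_conjWirtinger hf, pd_conjWirtinger hf, pd_comm hf j i]
  linear_combination (-(pd j (pd j f) x) / 4) * Complex.I_sq

end WirtingerOperators

section HermitianStructures

/-- The equations `∂_{q̄₁}μ - μ ∂_{q₂}μ = 0` and `∂_{q̄₂}μ + μ ∂_{q₁}μ = 0` at the point `x`. On an
open set they say that the positive almost Hermitian structure represented by `μ` is integrable. -/
def HermitianEqAt (μ : (Fin 4 → ℝ) → ℂ) (x : Fin 4 → ℝ) : Prop :=
  conjWirtinger 0 1 μ x - μ x * wirtinger 2 3 μ x = 0 ∧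
    conjWirtinger 2 3 μ x + μ x * wirtinger 0 1 μ x = 0

variable {μ : (Fin 4 → ℝ) → ℂ} {x : Fin 4 → ℝ}

theorem HermitianEqAt.sum_pd_sq_eq_zero (h : HermitianEqAt μ x) :
    ∑ i, (pd i μ x) ^ 2 = 0 := by
  have h₁ := wirtinger_mul_conjWirtinger μ x 0 1
  have h₂ := wirtinger_mul_conjWirtinger μ x 2 3
  rw [sub_eq_zero.mp h.1] at h₁
  rw [eq_neg_of_add_eq_zero_left h.2] at h₂
  rw [Fin.sum_univ_four]
  linear_combination -4 * h₁ - 4 * h₂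

theorem sum_pd_pd_eq_zero_of_eventually_hermitianEqAt (hμ : ContDiffAt ℝ 2 μ x)
    (h : ∀ᶠ y in 𝓝 x, HermitianEqAt μ y) : ∑ i, pd i (pd i μ) x = 0 := by
  have hd : DifferentiableAt ℝ μ x := hμ.differentiableAt two_ne_zero
  have h₁ : conjWirtinger 0 1 μ =ᶠ[𝓝 x] μ * wirtinger 2 3 μ :=
    h.mono fun _ hy ↦ sub_eq_zero.mp hy.1
  have h₂ : conjWirtinger 2 3 μ =ᶠ[𝓝 x] -(μ * wirtinger 0 1 μ) :=
    h.mono fun _ hy ↦ eq_neg_of_add_eq_zero_left hy.2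
  have hΔ₁ := wirtinger_conjWirtinger hμ 0 1
  have hΔ₂ := wirtinger_conjWirtinger hμ 2 3
  rw [wirtinger_congr h₁, wirtinger_mul hd (differentiableAt_wirtinger hμ 2 3)] at hΔ₁
  rw [wirtinger_congr h₂, wirtinger_neg,
    wirtinger_mul hd (differentiableAt_wirtinger hμ 0 1)] at hΔ₂
  rw [Fin.sum_univ_four]
  linear_combination -4 * hΔ₁ - 4 * hΔ₂ + 4 * μ x * wirtinger_comm hμ 0 1 2 3

end HermitianStructures

section Example

/-- The complex coordinate `q₂ = x₂ + i x₃` of `ℝ⁴`, as a real-linear map. -/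
def qTwo : (Fin 4 → ℝ) →L[ℝ] ℂ :=
  Complex.ofRealCLM.comp (ContinuousLinearMap.proj 2)
    + Complex.I • Complex.ofRealCLM.comp (ContinuousLinearMap.proj 3)

/-- The conjugate complex coordinate `q̄₁ = x₀ - i x₁` of `ℝ⁴`, as a real-linear map. -/
def qOneConj : (Fin 4 → ℝ) →L[ℝ] ℂ :=
  Complex.ofRealCLM.comp (ContinuousLinearMap.proj 0)
    - Complex.I • Complex.ofRealCLM.comp (ContinuousLinearMap.proj 1)

variable {x : Fin 4 → ℝ}

lemma qTwo_apply (x : Fin 4 → ℝ) : qTwo x = (x 2 : ℂ) + Complex.I * (x 3 : ℂ) := rfl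

lemma qOneConj_apply (x : Fin 4 → ℝ) : qOneConj x = (x 0 : ℂ) - Complex.I * (x 1 : ℂ) := rfl

lemma qOneConj_eq_zero_iff : qOneConj x = 0 ↔ x 0 = 0 ∧ x 1 = 0 := by
  simp [qOneConj_apply, Complex.ext_iff]

lemma muH_eq_neg_qTwo_div_qOneConj : muH = fun y ↦ (-qTwo) y / qOneConj y := by
  funext y
  rw [neg_apply, neg_div, qTwo_apply, qOneConj_apply, muH]

lemma contDiffAt_muH {n : WithTop ℕ∞} (hx : qOneConj x ≠ 0) : ContDiffAt ℝ n muH x := by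
  rw [muH_eq_neg_qTwo_div_qOneConj]
  simp only [div_eq_mul_inv]
  exact (-qTwo).contDiff.contDiffAt.mul (qOneConj.contDiff.contDiffAt.inv hx)

lemma pd_muH (hx : qOneConj x ≠ 0) (i : Fin 4) :
    pd i muH x =
      -(qTwo (Pi.single i 1) + muH x * qOneConj (Pi.single i 1)) / qOneConj x := by
  rw [pd, muH_eq_neg_qTwo_div_qOneConj,
    fderiv_div_apply (-qTwo).differentiableAt qOneConj.differentiableAt hx,
    ContinuousLinearMap.fderiv, ContinuousLinearMap.fderiv, neg_apply]
  ring

lemma pd_zero_muH (hx : qOneConj x ≠ 0) : pd 0 muH x = -muH x / qOneConj x := by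
  simp [pd_muH hx, qTwo_apply, qOneConj_apply (Pi.single _ _)]

lemma pd_one_muH (hx : qOneConj x ≠ 0) : pd 1 muH x = Complex.I * muH x / qOneConj x := by
  simp [pd_muH hx, qTwo_apply, qOneConj_apply (Pi.single _ _), mul_comm]

lemma pd_two_muH (hx : qOneConj x ≠ 0) : pd 2 muH x = -1 / qOneConj x := by
  simp [pd_muH hx, qTwo_apply, qOneConj_apply (Pi.single _ _)]

lemma pd_three_muH (hx : qOneConj x ≠ 0) : pd 3 muH x = -Complex.I / qOneConj x := by
  simp [pd_muH hx, qTwo_apply, qOneConj_apply (Pi.single _ _)]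

lemma hermitianEqAt_muH (hx : qOneConj x ≠ 0) : HermitianEqAt muH x := by
  have h₁ : wirtinger 0 1 muH x = 0 := by
    rw [wirtinger, pd_zero_muH hx, pd_one_muH hx]
    linear_combination (-muH x / qOneConj x / 2) * Complex.I_sq
  have h₁' : conjWirtinger 0 1 muH x = -muH x / qOneConj x := by
    rw [conjWirtinger, pd_zero_muH hx, pd_one_muH hx]
    linear_combination (muH x / qOneConj x / 2) * Complex.I_sq
  have h₂ : wirtinger 2 3 muH x = -1 / qOneConj x := by
    rw [wirtinger, pd_two_muH hx, pd_three_muH hx]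
    linear_combination (1 / qOneConj x / 2) * Complex.I_sq
  have h₂' : conjWirtinger 2 3 muH x = 0 := by
    rw [conjWirtinger, pd_two_muH hx, pd_three_muH hx]
    linear_combination (-1 / qOneConj x / 2) * Complex.I_sq
  rw [HermitianEqAt, h₁, h₁', h₂, h₂']
  constructor <;> ring

end Example

/-- Example 6.1 on `ℝ⁴`: `μ = −(x₂+ix₃)/(x₀−ix₁)` satisfies the Hermitian structure
equations on `{(x₀,x₁) ≠ (0,0)}`, and consequently is a harmonic morphism there. -/
theorem muH_hermitian_and_harmonic_morphism :
    ∀ x : Fin 4 → ℝ, ¬(x 0 = 0 ∧ x 1 = 0) →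
      ((pd 0 muH x + Complex.I * pd 1 muH x) / 2
          - muH x * ((pd 2 muH x - Complex.I * pd 3 muH x) / 2) = 0) ∧
      ((pd 2 muH x + Complex.I * pd 3 muH x) / 2
          + muH x * ((pd 0 muH x - Complex.I * pd 1 muH x) / 2) = 0) ∧
      (∑ i : Fin 4, pd i (pd i muH) x = 0) ∧
      (∑ i : Fin 4, (pd i muH x) ^ 2 = 0) := by
  intro x hx
  have hq : qOneConj x ≠ 0 := mt qOneConj_eq_zero_iff.mp hx
  have hq_near : ∀ᶠ y in 𝓝 x, qOneConj y ≠ 0 := qOneConj.continuous.continuousAt.eventually_ne hq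
  have h_eq : HermitianEqAt muH x := hermitianEqAt_muH hq
  have h_harmonic : ∑ i, pd i (pd i muH) x = 0 :=
    sum_pd_pd_eq_zero_of_eventually_hermitianEqAt (contDiffAt_muH hq)
      (hq_near.mono fun _ hy ↦ hermitianEqAt_muH hy)
  exact ⟨h_eq.1, h_eq.2, h_harmonic, h_eq.sum_pd_sq_eq_zero⟩

end
end

section
/- Fix c, s ∈ ℝ and define f on A = {(x₁,x₂,x₃) ∈ ℝ³ : (x₂,x₃) ≠ (0,0)} by f(x₁,x₂,x₃) = ((x₁+c)² + x₂² + x₃² − s² + 2·i·(x₁+c)·s)/(x₂ + i·x₃). Then ∑ᵢ₌₁³ (∂f/∂xᵢ)² = 0 on A, i.e. f is a horizontally conformal map. -/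
noncomputable section

/-- Partial derivative in the `i`-th coordinate direction of a map `ℝ³ → ℂ`;
coordinates on `ℝ³` are `(x₁, x₂, x₃)`. -/
def pd3 (i : Fin 3) (f : (Fin 3 → ℝ) → ℂ) (x : Fin 3 → ℝ) : ℂ :=
  fderiv ℝ f x (Pi.single i 1)

/-- The map `f = ((x₁+c)² + x₂² + x₃² − s² + 2i(x₁+c)s)/(x₂ + i x₃)` of Example 15.1,
whose level curves are the circles of Villarceau (for `s ≠ 0`). -/
def villarceau (c s : ℝ) (x : Fin 3 → ℝ) : ℂ :=
  (((x 0 + c) ^ 2 + x 1 ^ 2 + x 2 ^ 2 - s ^ 2 : ℝ) +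
      2 * Complex.I * ((x 0 + c : ℝ) : ℂ) * (s : ℂ)) /
    ((x 1 : ℂ) + Complex.I * (x 2 : ℂ))

/-!
Put `w = (x₁ + c + is, x₂, x₃) ∈ ℂ³`, a complex translate of `x`, and `ξ = (0, 1, i)`. For the
complex bilinear dot product, `f = (w ⬝ w) / (ξ ⬝ w)`, so that
`(ξ ⬝ w)² ∇f = 2 (ξ ⬝ w) w - (w ⬝ w) ξ`, which up to sign is `w ⬝ w` times the reflection of `ξ`
in the hyperplane `w^⊥`. Reflections preserve the dot product, so `∇f` is null because `ξ` is.
Geometrically, `1 / f` is the null linear form `ξ` composed with the inversion `w ↦ w / (w ⬝ w)`,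
which is conformal.
-/

theorem two_mul_dotProduct_smul_sub_smul_dotProduct_self {ι R : Type*} [Fintype ι] [CommRing R]
    (v ξ : ι → R) :
    ((2 * (ξ ⬝ᵥ v)) • v - (v ⬝ᵥ v) • ξ) ⬝ᵥ ((2 * (ξ ⬝ᵥ v)) • v - (v ⬝ᵥ v) • ξ) =
      (v ⬝ᵥ v) ^ 2 * (ξ ⬝ᵥ ξ) := by
  simp only [sub_dotProduct, dotProduct_sub, smul_dotProduct, dotProduct_smul, smul_eq_mul,
    dotProduct_comm v ξ]
  ring

theorem hasFDerivAt_fun_div {𝕜 𝕜' E : Type*} [NontriviallyNormedField 𝕜] [NormedField 𝕜']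
    [NormedAlgebra 𝕜 𝕜'] [NormedAddCommGroup E] [NormedSpace 𝕜 E] {f g : E → 𝕜'}
    {f' g' : E →L[𝕜] 𝕜'} {x : E} (hf : HasFDerivAt f f' x) (hg : HasFDerivAt g g' x)
    (hx : g x ≠ 0) :
    HasFDerivAt (fun y => f y / g y) ((g x ^ 2)⁻¹ • (g x • f' - f x • g')) x := by
  simp only [div_eq_mul_inv]
  refine (hf.fun_mul ((hasFDerivAt_inv' hx).comp x hg)).congr_fderiv ?_
  ext v
  simp only [ContinuousLinearMap.neg_comp, smul_neg, Function.comp_apply, add_apply, neg_apply,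
    smul_apply, ContinuousLinearMap.comp_apply, ContinuousLinearMap.mulLeftRight_apply, smul_eq_mul,
    sub_apply]
  field_simp
  ring

section ComplexShift

variable {ι : Type*}

/-- The affine embedding of `ℝ^ι` into `ℂ^ι` as the real slice translated by `a`; the translation
may be by a vector that is not real. -/
def complexShift (a : ι → ℂ) (x : ι → ℝ) : ι → ℂ :=
  fun i => x i + a i

theorem hasFDerivAt_complexShift_apply [Finite ι] (a : ι → ℂ) (x : ι → ℝ) (k : ι) :
    HasFDerivAt (complexShift a · k)
      (Complex.ofRealCLM ∘L ContinuousLinearMap.proj (R := ℝ) (φ := fun _ : ι => ℝ) k) x := by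
  have := Fintype.ofFinite ι
  exact (Complex.ofRealCLM.hasFDerivAt.comp x (hasFDerivAt_apply k x)).add_const (a k)

@[fun_prop]
theorem differentiable_complexShift [Finite ι] (a : ι → ℂ) :
    Differentiable ℝ (complexShift a) := by
  have := Fintype.ofFinite ι
  exact differentiable_pi.mpr fun k x => (hasFDerivAt_complexShift_apply a x k).differentiableAt

end ComplexShift

section ComplexGradient

variable {ι : Type*} [DecidableEq ι]

/-- The gradient of a complex-valued function on `ℝ^ι`, as a vector in `ℂ^ι`. It is paired with
itself by the complex bilinear `⬝ᵥ`, not the Hermitian product: horizontal conformality of `f` is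
`complexGradient f x ⬝ᵥ complexGradient f x = 0`. -/
def complexGradient (f : (ι → ℝ) → ℂ) (x : ι → ℝ) : ι → ℂ :=
  fun i => fderiv ℝ f x (Pi.single i 1)

theorem complexGradient_div [Finite ι] {f g : (ι → ℝ) → ℂ} {x : ι → ℝ}
    (hf : DifferentiableAt ℝ f x) (hg : DifferentiableAt ℝ g x) (hx : g x ≠ 0) :
    complexGradient (fun y => f y / g y) x =
      (g x ^ 2)⁻¹ • (g x • complexGradient f x - f x • complexGradient g x) := by
  have := Fintype.ofFinite ι
  ext i
  simp [complexGradient, (hasFDerivAt_fun_div hf.hasFDerivAt hg.hasFDerivAt hx).fderiv]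

theorem complexGradient_dotProduct [Finite ι] {κ : Type*} [Fintype κ] {u v : (ι → ℝ) → κ → ℂ}
    {x : ι → ℝ} (hu : DifferentiableAt ℝ u x) (hv : DifferentiableAt ℝ v x) :
    complexGradient (fun y => u y ⬝ᵥ v y) x =
      ∑ k, (u x k • complexGradient (v · k) x + v x k • complexGradient (u · k) x) := by
  have := Fintype.ofFinite ι
  rw [differentiableAt_pi] at hu hv
  ext i
  simp only [complexGradient, dotProduct]
  rw [fderiv_fun_sum fun k _ => (hu k).fun_mul (hv k)]
  simp [fderiv_fun_mul (hu _) (hv _), complexGradient]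

theorem complexGradient_complexShift_apply [Finite ι] (a : ι → ℂ) (x : ι → ℝ) (k : ι) :
    complexGradient (complexShift a · k) x = Pi.single k 1 := by
  ext i
  simp [complexGradient, (hasFDerivAt_complexShift_apply a x k).fderiv, Pi.single_apply, apply_ite,
    eq_comm]

variable [Fintype ι]

theorem complexGradient_dotProduct_complexShift (ξ a : ι → ℂ) (x : ι → ℝ) :
    complexGradient (fun y => ξ ⬝ᵥ complexShift a y) x = ξ := by
  rw [complexGradient_dotProduct (by fun_prop) (by fun_prop)]
  ext i
  simp [complexGradient_complexShift_apply, complexGradient, Pi.single_apply]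

theorem complexGradient_complexShift_dotProduct_self (a : ι → ℂ) (x : ι → ℝ) :
    complexGradient (fun y => complexShift a y ⬝ᵥ complexShift a y) x =
      (2 : ℂ) • complexShift a x := by
  rw [complexGradient_dotProduct (by fun_prop) (by fun_prop)]
  ext i
  simp [complexGradient_complexShift_apply, Pi.single_apply, two_mul, Finset.sum_add_distrib]

theorem complexGradient_div_dotProduct_complexShift (ξ a : ι → ℂ) (x : ι → ℝ)
    (hx : ξ ⬝ᵥ complexShift a x ≠ 0) :
    complexGradient
        (fun y => (complexShift a y ⬝ᵥ complexShift a y) / (ξ ⬝ᵥ complexShift a y)) x =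
      ((ξ ⬝ᵥ complexShift a x) ^ 2)⁻¹ • ((2 * (ξ ⬝ᵥ complexShift a x)) • complexShift a x -
        (complexShift a x ⬝ᵥ complexShift a x) • ξ) := by
  rw [complexGradient_div (by unfold dotProduct; fun_prop) (by unfold dotProduct; fun_prop) hx,
    complexGradient_complexShift_dotProduct_self, complexGradient_dotProduct_complexShift,
    smul_smul, mul_comm (ξ ⬝ᵥ complexShift a x) 2]

theorem complexGradient_div_dotProduct_complexShift_dotProduct_self (ξ a : ι → ℂ) (x : ι → ℝ)
    (hx : ξ ⬝ᵥ complexShift a x ≠ 0) :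
    let f := fun y => (complexShift a y ⬝ᵥ complexShift a y) / (ξ ⬝ᵥ complexShift a y)
    complexGradient f x ⬝ᵥ complexGradient f x =
      (complexShift a x ⬝ᵥ complexShift a x) ^ 2 / (ξ ⬝ᵥ complexShift a x) ^ 4 * (ξ ⬝ᵥ ξ) := by
  simp only [complexGradient_div_dotProduct_complexShift ξ a x hx]
  rw [smul_dotProduct, dotProduct_smul, two_mul_dotProduct_smul_sub_smul_dotProduct_self,
    smul_eq_mul, smul_eq_mul]
  field_simp

end ComplexGradient

theorem villarceau_eq_div_dotProduct_complexShift (c s : ℝ) :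
    villarceau c s = fun y =>
      (complexShift ![c + Complex.I * s, 0, 0] y ⬝ᵥ complexShift ![c + Complex.I * s, 0, 0] y) /
        (![0, 1, Complex.I] ⬝ᵥ complexShift ![c + Complex.I * s, 0, 0] y) := by
  ext y
  simp only [villarceau, complexShift, dotProduct, Fin.sum_univ_three]
  congr 1
  · simp only [Complex.ofReal_sub, Complex.ofReal_add, Complex.ofReal_pow, Matrix.cons_val_zero,
      Matrix.cons_val_one, Matrix.cons_val, add_zero]
    linear_combination (-(s : ℂ) ^ 2) * Complex.I_sq
  · simp

theorem ofReal_add_I_mul_ofReal_eq_zero_iff {u v : ℝ} :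
    (u : ℂ) + Complex.I * v = 0 ↔ u = 0 ∧ v = 0 := by
  simp [Complex.ext_iff]

/-- Example 15.1: the Villarceau map is horizontally conformal on
`{(x₁,x₂,x₃) : (x₂,x₃) ≠ (0,0)}`. -/
theorem villarceau_horizontally_conformal (c s : ℝ) :
    ∀ x : Fin 3 → ℝ, ¬(x 1 = 0 ∧ x 2 = 0) →
      ∑ i : Fin 3, (pd3 i (villarceau c s) x) ^ 2 = 0 := by
  intro x hx
  set ξ : Fin 3 → ℂ := ![0, 1, Complex.I] with hξ
  set a : Fin 3 → ℂ := ![c + Complex.I * s, 0, 0] with ha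
  have hnull : ξ ⬝ᵥ ξ = 0 := by simp [hξ, dotProduct, Fin.sum_univ_three]
  have hden : ξ ⬝ᵥ complexShift a x ≠ 0 := by
    simpa [hξ, ha, dotProduct, Fin.sum_univ_three, complexShift] using
      mt ofReal_add_I_mul_ofReal_eq_zero_iff.mp hx
  calc ∑ i, pd3 i (villarceau c s) x ^ 2
      = complexGradient (villarceau c s) x ⬝ᵥ complexGradient (villarceau c s) x := by
        simp only [pd3, complexGradient, dotProduct, sq]
    _ = (complexShift a x ⬝ᵥ complexShift a x) ^ 2 / (ξ ⬝ᵥ complexShift a x) ^ 4 * (ξ ⬝ᵥ ξ) := by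
        rw [villarceau_eq_div_dotProduct_complexShift]
        exact complexGradient_div_dotProduct_complexShift_dotProduct_self ξ a x hden
    _ = 0 := by rw [hnull, mul_zero]

end
end
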